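/- arXiv:2403.00682 — 5 statements merged into one kernel-verified Lean document; each statement's English description precedes it below -/
import Mathlib

section
/- Let T be a real (n×m)-matrix of full rank m with m < n. If m ≥ 3, then the surface integral ∫_{S^{n−1}} ‖Tᵗη‖^{-2} dη over the unit sphere S^{n−1} of ℝⁿ is finite, and if m ≥ 5, then the surface integral ∫_{S^{n−1}} ‖Tᵗη‖^{-4} dη is finite, despite the singular integrands. -/
/-!
A power of `‖L x‖` is homogeneous, so in polar coordinates its integral over the unit ball
is a positive multiple of its integral over the unit sphere, and it suffices to bound the former.
Splitting the space as the target of `L` times `ker L`, Haar measure becomes a multiple of a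
product measure; over a bounded set the `ker L` factor contributes only a constant, which leaves
the integral of `‖y‖ ^ (-s)` near the origin of the target, finite when `s` is less than its
dimension.
-/

open MeasureTheory Metric Matrix

section SurjectiveLinearMap

variable {𝕜 E F : Type*} [NontriviallyNormedField 𝕜] [ProperSpace 𝕜]
  [NormedAddCommGroup E] [NormedSpace 𝕜 E] [FiniteDimensional 𝕜 E]
  [MeasurableSpace E] [BorelSpace E]
  [NormedAddCommGroup F] [NormedSpace 𝕜 F] [MeasurableSpace F] [BorelSpace F]
  (μ : Measure E) [μ.IsAddHaarMeasure] (ν : Measure F) [ν.IsAddHaarMeasure]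
  {L : E →ₗ[𝕜] F} {K : Set E}

lemma exists_map_restrict_le_smul_addHaar (hL : Function.Surjective L)
    (hK : Bornology.IsBounded K) :
    ∃ c : ENNReal, c ≠ ⊤ ∧ (μ.restrict K).map L ≤ c • ν.restrict (L '' K) := by
  have : FiniteDimensional 𝕜 F := .of_surjective L hL
  have : ProperSpace E := FiniteDimensional.proper 𝕜 E
  have : ProperSpace F := FiniteDimensional.proper 𝕜 F
  have : ProperSpace L.ker := FiniteDimensional.proper 𝕜 L.ker
  have hLm : Measurable L := L.continuous_of_finiteDimensional.measurable
  obtain ⟨T, hT⟩ := L.ker.exists_isCompl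
  let g : E →ₗ[𝕜] L.ker := L.ker.projectionOnto T hT
  let e : E ≃L[𝕜] F × L.ker :=
    (L.equivProdOfSurjectiveOfIsCompl g (LinearMap.range_eq_top.2 hL)
      (Submodule.range_projectionOnto hT)
      (by simpa [g] using hT)).toContinuousLinearEquiv
  let κ : Measure L.ker := Measure.addHaar
  obtain ⟨c, hc⟩ : ∃ c : NNReal, μ.map e = c • ν.prod κ :=
    ⟨_, Measure.isAddLeftInvariant_eq_smul _ _⟩
  have hgK : κ (g '' K) < ⊤ := (g.toContinuousLinearMap.lipschitz.isBounded_image hK).measure_lt_top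
  refine ⟨c * κ (g '' K), by finiteness, Measure.le_iff.2 fun A hA ↦ ?_⟩
  calc (μ.restrict K).map L A = μ (L ⁻¹' A ∩ K) := by
        rw [Measure.map_apply hLm hA, Measure.restrict_apply (hLm hA)]
    _ ≤ μ (e ⁻¹' ((A ∩ L '' K) ×ˢ (g '' K))) :=
        measure_mono fun x hx ↦ ⟨⟨hx.1, x, hx.2, rfl⟩, x, hx.2, rfl⟩
    _ = μ.map e ((A ∩ L '' K) ×ˢ (g '' K)) :=
        (e.toHomeomorph.measurableEmbedding.map_apply _ _).symm
    _ = ((c * κ (g '' K)) • ν.restrict (L '' K)) A := by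
        rw [hc, Measure.smul_apply, Measure.prod_prod, Measure.smul_apply,
          Measure.restrict_apply hA, ENNReal.smul_def, smul_eq_mul, smul_eq_mul]
        ring

lemma setLIntegral_comp_linearMap_lt_top (hL : Function.Surjective L)
    (hK : Bornology.IsBounded K) {f : F → ENNReal} (hf : Measurable f)
    (hfin : ∫⁻ y in L '' K, f y ∂ν < ⊤) : ∫⁻ x in K, f (L x) ∂μ < ⊤ := by
  obtain ⟨c, hc, hle⟩ := exists_map_restrict_le_smul_addHaar μ ν hL hK
  calc ∫⁻ x in K, f (L x) ∂μ = ∫⁻ y, f y ∂(μ.restrict K).map L :=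
        (lintegral_map hf L.continuous_of_finiteDimensional.measurable).symm
    _ ≤ ∫⁻ y, f y ∂(c • ν.restrict (L '' K)) := lintegral_mono' hle le_rfl
    _ = c * ∫⁻ y in L '' K, f y ∂ν := lintegral_smul_measure ..
    _ < ⊤ := ENNReal.mul_lt_top hc.lt_top hfin

end SurjectiveLinearMap

section PolarCoordinates

variable {E : Type*} [NormedAddCommGroup E] [NormedSpace ℝ E] [FiniteDimensional ℝ E]
  [MeasurableSpace E] [BorelSpace E] (μ : Measure E) [μ.IsAddHaarMeasure]

lemma lintegral_eq_lintegral_toSphere_prod [Nontrivial E] (f : E → ENNReal) :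
    ∫⁻ x, f x ∂μ = ∫⁻ p : sphere (0 : E) 1 × Set.Ioi (0 : ℝ), f (p.2.1 • p.1.1)
      ∂μ.toSphere.prod (.volumeIoiPow (Module.finrank ℝ E - 1)) := by
  calc ∫⁻ x, f x ∂μ = ∫⁻ x : ({0}ᶜ : Set E), f x ∂μ.comap (↑) := by
        rw [lintegral_subtype_comap (measurableSet_singleton _).compl,
          restrict_compl_singleton]
    _ = _ := by
        rw [← μ.measurePreserving_homeomorphUnitSphereProd.lintegral_comp_emb
          (homeomorphUnitSphereProd E).measurableEmbedding]
        refine lintegral_congr fun x ↦ ?_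
        rw [← homeomorphUnitSphereProd_symm_apply_coe, Homeomorph.symm_apply_apply]

lemma setLIntegral_ball_eq_lintegral_toSphere_mul [Nontrivial E] {f : E → ENNReal}
    (hf : Measurable f) {a : ℝ}
    (hfa : ∀ r : ℝ, 0 < r → ∀ x, f (r • x) = ENNReal.ofReal r ^ a * f x)
    (R : Set.Ioi (0 : ℝ)) :
    ∫⁻ x in ball 0 R, f x ∂μ = (∫⁻ η : sphere (0 : E) 1, f η ∂μ.toSphere) *
      ∫⁻ r in Set.Iio R, ENNReal.ofReal r.1 ^ a ∂.volumeIoiPow (Module.finrank ℝ E - 1) := by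
  rw [← lintegral_indicator measurableSet_ball, ← lintegral_indicator measurableSet_Iio,
    lintegral_eq_lintegral_toSphere_prod,
    ← lintegral_prod_mul (by fun_prop) (by fun_prop (disch := measurability))]
  refine lintegral_congr fun ⟨η, r⟩ ↦ ?_
  have hr : 0 < r.1 := r.2
  have hmem : r.1 • η.1 ∈ ball (0 : E) R ↔ r ∈ Set.Iio R := by
    simp [norm_smul, abs_of_pos hr, ← Subtype.coe_lt_coe]
  by_cases hrR : r ∈ Set.Iio R
  · rw [Set.indicator_of_mem (hmem.2 hrR), Set.indicator_of_mem hrR, hfa _ hr, mul_comm]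
  · rw [Set.indicator_of_notMem (mt hmem.1 hrR), Set.indicator_of_notMem hrR, mul_zero]

lemma setLIntegral_Iio_rpow_volumeIoiPow_pos (n : ℕ) (a : ℝ) (R : Set.Ioi (0 : ℝ)) :
    0 < ∫⁻ r in Set.Iio R, ENNReal.ofReal r.1 ^ a ∂.volumeIoiPow n := by
  have hsupp : (Function.support fun r : Set.Ioi (0 : ℝ) ↦ ENNReal.ofReal r.1 ^ a) = .univ :=
    Set.eq_univ_of_forall fun r ↦
      (ENNReal.rpow_pos (ENNReal.ofReal_pos.2 r.2) ENNReal.ofReal_ne_top).ne'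
  have hR : 0 < R.1 := R.2
  rw [setLIntegral_pos_iff (by fun_prop), hsupp, Set.univ_inter,
    Measure.volumeIoiPow_apply_Iio, ENNReal.ofReal_pos]
  positivity

lemma lintegral_toSphere_lt_top_of_setLIntegral_ball_lt_top {f : E → ENNReal}
    (hf : Measurable f) {a : ℝ}
    (hfa : ∀ r : ℝ, 0 < r → ∀ x, f (r • x) = ENNReal.ofReal r ^ a * f x)
    {R : ℝ} (hR : 0 < R) (hball : ∫⁻ x in ball 0 R, f x ∂μ < ⊤) :
    ∫⁻ η : sphere (0 : E) 1, f η ∂μ.toSphere < ⊤ := by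
  nontriviality E using μ.toSphere_eq_zero_iff.2 ‹_›
  rw [setLIntegral_ball_eq_lintegral_toSphere_mul μ hf hfa ⟨R, hR⟩] at hball
  exact ENNReal.lt_top_of_mul_ne_top_left hball.ne
    (setLIntegral_Iio_rpow_volumeIoiPow_pos _ a _).ne'

lemma setLIntegral_enorm_rpow_neg_lt_top {s : ℝ} (hs : s < Module.finrank ℝ E) {K : Set E}
    (hK : Bornology.IsBounded K) : ∫⁻ y in K, ‖y‖ₑ ^ (-s) ∂μ < ⊤ := by
  obtain hE | hE := subsingleton_or_nontrivial E
  · have hs' : 0 < -s := by simpa [Module.finrank_zero_of_subsingleton] using hs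
    simp [Subsingleton.elim _ (0 : E), ENNReal.zero_rpow_of_pos hs']
  obtain ⟨R, hKR⟩ := hK.subset_ball 0
  have hint : IntegrableOn (fun y : E ↦ ‖y‖ ^ (-s)) (ball 0 R) μ :=
    integrableOn_ball_of_norm_le_rpow (C := 1) Module.finrank_pos hs
      (.of_forall fun y ↦ by simp [Real.abs_rpow_of_nonneg])
      (measurable_norm.pow_const _).aestronglyMeasurable
  calc ∫⁻ y in K, ‖y‖ₑ ^ (-s) ∂μ ≤ ∫⁻ y in ball 0 R, ‖y‖ₑ ^ (-s) ∂μ := lintegral_mono_set hKR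
    _ = ∫⁻ y in ball 0 R, ENNReal.ofReal (‖y‖ ^ (-s)) ∂μ := by
      refine lintegral_congr_ae (ae_restrict_of_ae ?_)
      filter_upwards [Measure.ae_ne μ 0] with y hy
      rw [← ofReal_norm, ENNReal.ofReal_rpow_of_pos (norm_pos_iff.2 hy)]
    _ < ⊤ := hint.lintegral_lt_top

end PolarCoordinates

lemma surjective_adjoint_of_injective {𝕜 E F : Type*} [RCLike 𝕜]
    [NormedAddCommGroup E] [InnerProductSpace 𝕜 E] [FiniteDimensional 𝕜 E]
    [NormedAddCommGroup F] [InnerProductSpace 𝕜 F] [FiniteDimensional 𝕜 F]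
    {A : E →ₗ[𝕜] F} (hA : Function.Injective A) : Function.Surjective A.adjoint := by
  rw [← LinearMap.range_eq_top, ← LinearMap.orthogonal_ker, LinearMap.ker_eq_bot.2 hA,
    Submodule.bot_orthogonal_eq_top]

lemma surjective_toEuclideanLin_transpose {ι κ : Type*} [Fintype ι] [DecidableEq ι] [Fintype κ]
    [DecidableEq κ] {T : Matrix ι κ ℝ} (hT : Function.Injective (toEuclideanLin T)) :
    Function.Surjective (toEuclideanLin Tᵀ) := by
  rw [← conjTranspose_eq_transpose_of_trivial, toEuclideanLin_conjTranspose_eq_adjoint]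
  exact surjective_adjoint_of_injective hT

lemma inv_ofReal_norm_pow_eq_enorm_rpow_neg {F : Type*} [SeminormedAddGroup F] (y : F) (k : ℕ) :
    (ENNReal.ofReal (‖y‖ ^ k))⁻¹ = ‖y‖ₑ ^ (-(k : ℝ)) := by
  rw [ENNReal.ofReal_pow (norm_nonneg y), ofReal_norm, ENNReal.rpow_neg, ENNReal.rpow_natCast]

theorem surface_integral_inverse_norm_finite_general {E F : Type*}
    [NormedAddCommGroup E] [NormedSpace ℝ E] [FiniteDimensional ℝ E]
    [MeasurableSpace E] [BorelSpace E] (μ : Measure E) [μ.IsAddHaarMeasure]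
    [NormedAddCommGroup F] [NormedSpace ℝ F]
    {L : E →ₗ[ℝ] F} (hL : Function.Surjective L) {s : ℝ} (hs : s < Module.finrank ℝ F) :
    ∫⁻ η : sphere (0 : E) 1, ‖L η‖ₑ ^ (-s) ∂μ.toSphere < ⊤ := by
  have : FiniteDimensional ℝ F := .of_surjective L hL
  have hLc : Continuous L := L.continuous_of_finiteDimensional
  borelize F
  refine lintegral_toSphere_lt_top_of_setLIntegral_ball_lt_top μ (f := fun x ↦ ‖L x‖ₑ ^ (-s))
    (by fun_prop) (a := -s) (fun r hr x ↦ ?homogeneous) one_pos ?ball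
  case homogeneous =>
    rw [map_smul, enorm_smul, Real.enorm_of_nonneg hr.le,
      ENNReal.mul_rpow_of_ne_top ENNReal.ofReal_ne_top enorm_ne_top]
  case ball =>
    have hbdd : Bornology.IsBounded (L '' ball 0 1) :=
      L.toContinuousLinearMap.lipschitz.isBounded_image isBounded_ball
    exact setLIntegral_comp_linearMap_lt_top μ Measure.addHaar hL isBounded_ball (by fun_prop)
      (setLIntegral_enorm_rpow_neg_lt_top _ hs hbdd)

/-- for a full-rank `(n×m)`-matrix `T` with `m < n`, the surface integrals of
`‖Tᵗη‖⁻²` (for `m ≥ 3`) and of `‖Tᵗη‖⁻⁴` (for `m ≥ 5`) over the unit sphere of `ℝⁿ`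
are finite, despite the singular integrands. -/
theorem surface_integral_inverse_norm_finite (m n : ℕ) (hmn : m < n)
    (T : Matrix (Fin n) (Fin m) ℝ)
    (hT : Function.Injective (Matrix.toEuclideanLin T)) :
    (3 ≤ m →
      ∫⁻ η : sphere (0 : EuclideanSpace ℝ (Fin n)) 1,
        (ENNReal.ofReal (‖Matrix.toEuclideanLin Tᵀ (η : EuclideanSpace ℝ (Fin n))‖ ^ 2))⁻¹
        ∂(volume : Measure (EuclideanSpace ℝ (Fin n))).toSphere < ⊤) ∧
    (5 ≤ m →
      ∫⁻ η : sphere (0 : EuclideanSpace ℝ (Fin n)) 1,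
        (ENNReal.ofReal (‖Matrix.toEuclideanLin Tᵀ (η : EuclideanSpace ℝ (Fin n))‖ ^ 4))⁻¹
        ∂(volume : Measure (EuclideanSpace ℝ (Fin n))).toSphere < ⊤) := by
  have hsurj := surjective_toEuclideanLin_transpose hT
  simp only [inv_ofReal_norm_pow_eq_enorm_rpow_neg]
  refine ⟨fun hm ↦ surface_integral_inverse_norm_finite_general volume hsurj ?_,
    fun hm ↦ surface_integral_inverse_norm_finite_general volume hsurj ?_⟩ <;>
  simpa using Nat.lt_of_succ_le hm
end

section
/- Let m < n and let P be a real (m×n)-matrix that is an orthogonal projection, i.e. P Pᵗ = I_m. Then for every 0 ≤ δ < 1 the uniform probability measure of the set {x ∈ S^{n−1} : ‖Px‖² ≤ δ} equals F(δ) = (Γ(α+β)/(Γ(α)Γ(β))) ∫_0^δ t^{α−1} (1−t)^{β−1} dt, where α = m/2 and β = (n−m)/2. Moreover F(δ) tends to 1 as δ tends to 1. -/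
open MeasureTheory Metric Matrix
open scoped ENNReal

/-!
Lebesgue measure disintegrates over the norm, so the uniform measure of a subset of the sphere is
the normalized volume of the cone it spans in the unit ball. Let `K` be the row space of `P`. The
coordinates of `x` in `K` and in `Kᗮ` vary independently, and their squared norms `u = ‖Px‖ ^ 2` and
`v = ‖x‖ ^ 2 - u` are governed by the power laws `u ^ (α - 1) du` and `v ^ (β - 1) dv`. Euler's
substitution `(u, v) ↦ (u / (u + v), u + v)`, the one that proves `Γ(α) Γ(β) = B(α, β) Γ(α + β)`,
turns their product into the product of the beta law and the power law of exponent `α + β`. Thus the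
ratio `‖Px‖ ^ 2 / ‖x‖ ^ 2` is beta distributed independently of `‖x‖`. As the uniform measure and
the beta law both have mass one, no volume constant ever has to be evaluated.
-/

section

open Filter ProbabilityTheory Set Topology
open Module (finrank)

section PowerMeasure

/-- The density of the power law `t ^ (a - 1) dt` on `(0, ∞)`, extended by zero to the whole real
line, so that integrals against it can be translated and rescaled freely. -/
noncomputable def powerDensity (a : ℝ) : ℝ → ℝ≥0∞ :=
  (Ioi 0).indicator fun t ↦ ENNReal.ofReal (t ^ (a - 1))

/-- The power law `t ^ (a - 1) dt` on `(0, ∞)` as a measure on the real line. Up to a constant, it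
is the law of `‖x‖ ^ 2` under Lebesgue measure in dimension `2 * a`. -/
noncomputable def powerMeasure (a : ℝ) : Measure ℝ :=
  volume.withDensity (powerDensity a)

instance (a : ℝ) : SFinite (powerMeasure a) := by
  unfold powerMeasure
  infer_instance

@[fun_prop]
lemma measurable_powerDensity (a : ℝ) : Measurable (powerDensity a) := by
  unfold powerDensity
  fun_prop (disch := measurability)

lemma powerDensity_of_pos {t : ℝ} (a : ℝ) (ht : 0 < t) :
    powerDensity a t = ENNReal.ofReal (t ^ (a - 1)) :=
  indicator_of_mem ht _

lemma powerDensity_of_nonpos {t : ℝ} (a : ℝ) (ht : t ≤ 0) : powerDensity a t = 0 :=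
  indicator_of_notMem ht.not_gt _

lemma powerDensity_mul {s : ℝ} (a : ℝ) (hs : 0 < s) (t : ℝ) :
    powerDensity a (s * t) = ENNReal.ofReal (s ^ (a - 1)) * powerDensity a t := by
  rcases le_or_gt t 0 with ht | ht
  · rw [powerDensity_of_nonpos a ht,
      powerDensity_of_nonpos a (mul_nonpos_of_nonneg_of_nonpos hs.le ht), mul_zero]
  · rw [powerDensity_of_pos a ht, powerDensity_of_pos a (mul_pos hs ht),
      Real.mul_rpow hs.le ht.le, ENNReal.ofReal_mul (by positivity)]

lemma powerMeasure_Iio {a r : ℝ} (ha : 0 < a) (hr : 0 ≤ r) :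
    powerMeasure a (Iio r) = ENNReal.ofReal (r ^ a / a) := by
  have hint : IntervalIntegrable (fun t : ℝ ↦ t ^ (a - 1)) volume 0 r :=
    intervalIntegral.intervalIntegrable_rpow' (by linarith)
  have hnonneg : 0 ≤ᵐ[volume.restrict (Ioc 0 r)] fun t : ℝ ↦ t ^ (a - 1) :=
    ae_restrict_of_forall_mem measurableSet_Ioc fun t ht ↦ Real.rpow_nonneg ht.1.le _
  rw [powerMeasure, withDensity_apply _ measurableSet_Iio, powerDensity,
    lintegral_indicator measurableSet_Ioi, Measure.restrict_restrict measurableSet_Ioi,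
    Ioi_inter_Iio, Measure.restrict_congr_set Ioo_ae_eq_Ioc,
    ← ofReal_integral_eq_lintegral_ofReal hint.1 hnonneg, ← intervalIntegral.integral_of_le hr,
    integral_rpow (Or.inl (by linarith)), sub_add_cancel, Real.zero_rpow ha.ne', sub_zero]

lemma powerMeasure_Iio_ne_top {a : ℝ} (ha : 0 < a) (r : ℝ) : powerMeasure a (Iio r) ≠ ∞ := by
  refine measure_ne_top_of_subset (Iio_subset_Iio (le_abs_self r)) ?_
  rw [powerMeasure_Iio ha (abs_nonneg r)]
  exact ENNReal.ofReal_ne_top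

end PowerMeasure

section Beta

lemma lintegral_comp_mul_left {s : ℝ} (hs : s ≠ 0) {f : ℝ → ℝ≥0∞} (hf : Measurable f) :
    ENNReal.ofReal |s| * ∫⁻ t, f (s * t) = ∫⁻ t, f t := by
  rw [← lintegral_map hf (measurable_const_mul s), ← smul_eq_mul, ← lintegral_smul_measure,
    Real.smul_map_volume_mul_left hs]

@[fun_prop]
lemma measurable_betaPDF (α β : ℝ) : Measurable (betaPDF α β) :=
  (measurable_betaPDFReal α β).ennreal_ofReal

lemma betaPDF_eq_powerDensity_mul {α β : ℝ} (hα : 0 < α) (hβ : 0 < β) (t : ℝ) :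
    ENNReal.ofReal (beta α β) * betaPDF α β t = powerDensity α t * powerDensity β (1 - t) := by
  rcases le_or_gt t 0 with h0 | h0
  · rw [betaPDF_eq_zero_of_nonpos h0, powerDensity_of_nonpos α h0, mul_zero, zero_mul]
  rcases le_or_gt 1 t with h1 | h1
  · rw [betaPDF_eq_zero_of_one_le h1, powerDensity_of_nonpos β (sub_nonpos.2 h1), mul_zero,
      mul_zero]
  · have hB := beta_pos hα hβ
    rw [betaPDF_of_pos_lt_one h0 h1, powerDensity_of_pos α h0,
      powerDensity_of_pos β (sub_pos.2 h1), ← ENNReal.ofReal_mul hB.le,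
      ← ENNReal.ofReal_mul (by positivity)]
    congr 1
    field_simp

lemma ofReal_mul_powerDensity_mul_powerDensity {α β s : ℝ} (hα : 0 < α) (hβ : 0 < β) (hs : 0 < s)
    (t : ℝ) :
    ENNReal.ofReal s * (powerDensity α (s * t) * powerDensity β (s - s * t)) =
      ENNReal.ofReal (beta α β) * (powerDensity (α + β) s * betaPDF α β t) := by
  have hpow : s * (s ^ (α - 1) * s ^ (β - 1)) = s ^ (α + β - 1) := by
    rw [← Real.rpow_add hs, mul_comm, ← Real.rpow_add_one hs.ne']
    ring_nf
  rw [show s - s * t = s * (1 - t) by ring, powerDensity_mul α hs, powerDensity_mul β hs,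
    powerDensity_of_pos _ hs, ← hpow, ENNReal.ofReal_mul hs.le, ENNReal.ofReal_mul (by positivity)]
  calc
    _ = ENNReal.ofReal s * (ENNReal.ofReal (s ^ (α - 1)) * ENNReal.ofReal (s ^ (β - 1))) *
        (powerDensity α t * powerDensity β (1 - t)) := by ring
    _ = _ := by
      rw [← betaPDF_eq_powerDensity_mul hα hβ]
      ring

lemma lintegral_powerDensity_mul_powerDensity_sub {α β : ℝ} (hα : 0 < α) (hβ : 0 < β) (s : ℝ)
    {g : ℝ → ℝ≥0∞} (hg : Measurable g) :
    ∫⁻ u, powerDensity α u * powerDensity β (s - u) * g (u / s) =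
      ENNReal.ofReal (beta α β) * (powerDensity (α + β) s * ∫⁻ t, betaPDF α β t * g t) := by
  rcases le_or_gt s 0 with hs | hs
  · have hzero (u : ℝ) : powerDensity α u * powerDensity β (s - u) = 0 := by
      rcases le_or_gt u 0 with hu | hu
      · rw [powerDensity_of_nonpos α hu, zero_mul]
      · rw [powerDensity_of_nonpos β (by linarith : s - u ≤ 0), mul_zero]
    simp [hzero, powerDensity_of_nonpos (α + β) hs]
  · rw [← lintegral_comp_mul_left hs.ne' (by fun_prop), abs_of_pos hs,
      ← lintegral_const_mul _ (by fun_prop), ← lintegral_const_mul _ (by fun_prop),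
      ← lintegral_const_mul _ (by fun_prop)]
    refine lintegral_congr fun t ↦ ?_
    rw [mul_div_cancel_left₀ t hs.ne', ← mul_assoc,
      ofReal_mul_powerDensity_mul_powerDensity hα hβ hs]
    ring

theorem map_prod_powerMeasure {α β : ℝ} (hα : 0 < α) (hβ : 0 < β) :
    ((powerMeasure α).prod (powerMeasure β)).map (fun p ↦ (p.1 / (p.1 + p.2), p.1 + p.2)) =
      ENNReal.ofReal (beta α β) • (betaMeasure α β).prod (powerMeasure (α + β)) := by
  refine Measure.ext_of_lintegral _ fun f hf ↦ ?_
  calc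
    _ = ∫⁻ u, ∫⁻ v, powerDensity α u * powerDensity β v * f (u / (u + v), u + v) := by
      rw [lintegral_map hf (by fun_prop), powerMeasure, powerMeasure,
        prod_withDensity (by fun_prop) (by fun_prop),
        lintegral_withDensity_eq_lintegral_mul _ (by fun_prop) (by fun_prop),
        lintegral_prod _ (by fun_prop)]
      rfl
    _ = ∫⁻ u, ∫⁻ s, powerDensity α u * powerDensity β (s - u) * f (u / s, s) := by
      refine lintegral_congr fun u ↦ ?_
      rw [← lintegral_sub_right_eq_self _ u]
      simp only [add_sub_cancel]
    _ = ∫⁻ s, ∫⁻ u, powerDensity α u * powerDensity β (s - u) * f (u / s, s) :=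
      lintegral_lintegral_swap (by fun_prop)
    _ = ∫⁻ s, ENNReal.ofReal (beta α β) *
          (powerDensity (α + β) s * ∫⁻ t, betaPDF α β t * f (t, s)) :=
      lintegral_congr fun s ↦
        lintegral_powerDensity_mul_powerDensity_sub hα hβ s (g := fun t ↦ f (t, s)) (by fun_prop)
    _ = _ := by
      rw [lintegral_const_mul _ (by fun_prop), lintegral_smul_measure, smul_eq_mul, betaMeasure,
        powerMeasure, prod_withDensity (by fun_prop) (by fun_prop),
        lintegral_withDensity_eq_lintegral_mul _ (by fun_prop) hf,
        lintegral_prod_symm _ (by fun_prop)]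
      congr 1
      refine lintegral_congr fun s ↦ ?_
      rw [← lintegral_const_mul _ (by fun_prop)]
      refine lintegral_congr fun t ↦ ?_
      simp only [Pi.mul_apply]
      ring

instance (α β : ℝ) : NullSingletonClass (betaMeasure α β) := by
  unfold betaMeasure
  infer_instance

lemma betaMeasure_real_Iic {α β δ : ℝ} (hα : 0 < α) (hβ : 0 < β) (h0 : 0 ≤ δ) (h1 : δ < 1) :
    (betaMeasure α β).real (Iic δ) =
      (beta α β)⁻¹ * ∫ t in (0 : ℝ)..δ, t ^ (α - 1) * (1 - t) ^ (β - 1) := by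
  have hnonneg (t : ℝ) : 0 ≤ betaPDFReal α β t := by
    by_cases ht : 0 < t ∧ t < 1
    · exact (betaPDFReal_pos ht.1 ht.2 hα hβ).le
    · rw [betaPDFReal, if_neg ht]
  have hzero (t : ℝ) (ht : t ∈ Iic δ \ Ioc 0 δ) : betaPDFReal α β t = 0 :=
    if_neg fun h ↦ ht.2 ⟨h.1, ht.1⟩
  calc
    _ = ∫ t in Iic δ, betaPDFReal α β t := by
      rw [measureReal_def, betaMeasure, withDensity_apply _ measurableSet_Iic,
        integral_eq_lintegral_of_nonneg_ae (ae_of_all _ hnonneg)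
          (measurable_betaPDFReal α β).aestronglyMeasurable]
      rfl
    _ = ∫ t in Ioc 0 δ, betaPDFReal α β t :=
      setIntegral_eq_of_subset_of_forall_sdiff_eq_zero measurableSet_Iic Ioc_subset_Iic_self hzero
    _ = ∫ t in Ioc 0 δ, (beta α β)⁻¹ * (t ^ (α - 1) * (1 - t) ^ (β - 1)) :=
      setIntegral_congr_fun measurableSet_Ioc fun t ht ↦ by
        simp only [betaPDFReal, if_pos (And.intro ht.1 (ht.2.trans_lt h1)), one_div, mul_assoc]
    _ = _ := by rw [integral_const_mul, intervalIntegral.integral_of_le h0]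

lemma betaMeasure_Ioi_one (α β : ℝ) : betaMeasure α β (Ioi 1) = 0 := by
  rw [betaMeasure, withDensity_apply _ measurableSet_Ioi]
  exact setLIntegral_eq_zero measurableSet_Ioi fun x hx ↦ betaPDF_eq_zero_of_one_le (le_of_lt hx)

lemma tendsto_measureReal_Iic_nhdsLT (μ : Measure ℝ) [IsProbabilityMeasure μ] {x : ℝ}
    (h : μ {x} = 0) :
    Tendsto (fun y ↦ μ.real (Iic y)) (𝓝[<] x) (𝓝 (μ.real (Iic x))) := by
  rw [← measure_cdf μ, StieltjesFunction.measure_singleton, ENNReal.ofReal_eq_zero, sub_nonpos] at h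
  have hlim := (monotone_cdf μ).tendsto_leftLim x
  rw [((monotone_cdf μ).leftLim_le le_rfl).antisymm h, cdf_eq_real] at hlim
  exact hlim.congr (cdf_eq_real μ)

lemma betaMeasure_real_Iic_one {α β : ℝ} (hα : 0 < α) (hβ : 0 < β) :
    (betaMeasure α β).real (Iic 1) = 1 := by
  have := isProbabilityMeasureBeta hα hβ
  rw [← compl_Ioi, probReal_compl_eq_one_sub measurableSet_Ioi, measureReal_def,
    betaMeasure_Ioi_one, ENNReal.toReal_zero, sub_zero]

theorem tendsto_inv_beta_mul_integral {α β : ℝ} (hα : 0 < α) (hβ : 0 < β) :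
    Tendsto (fun δ ↦ (beta α β)⁻¹ * ∫ t in (0 : ℝ)..δ, t ^ (α - 1) * (1 - t) ^ (β - 1))
      (𝓝[<] 1) (𝓝 1) := by
  have := isProbabilityMeasureBeta hα hβ
  have hlim := tendsto_measureReal_Iic_nhdsLT (betaMeasure α β) (measure_singleton 1)
  rw [betaMeasure_real_Iic_one hα hβ] at hlim
  refine hlim.congr' ?_
  filter_upwards [Ico_mem_nhdsLT zero_lt_one] with δ hδ
  exact betaMeasure_real_Iic hα hβ hδ.1 hδ.2

end Beta

section Sphere

lemma half_finrank_pos (E : Type*) [AddCommGroup E] [Module ℝ E] [FiniteDimensional ℝ E]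
    [Nontrivial E] : (0 : ℝ) < finrank ℝ E / 2 :=
  half_pos (Nat.cast_pos.2 Module.finrank_pos)

variable {E : Type*} [NormedAddCommGroup E] [NormedSpace ℝ E]

open scoped Pointwise in
lemma Ioo_smul_image_sphere_preimage {C : Set E} (hC : ∀ r : ℝ, 0 < r → ∀ x, r • x ∈ C ↔ x ∈ C) :
    Ioo (0 : ℝ) 1 • ((↑) '' ((↑) ⁻¹' C : Set (sphere (0 : E) 1))) = (C ∩ ball 0 1) \ {0} := by
  ext y
  simp only [Set.mem_smul, mem_image, mem_preimage, Set.mem_sdiff, mem_inter_iff, mem_ball_zero_iff,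
    mem_singleton_iff]
  constructor
  · rintro ⟨r, ⟨hr0, hr1⟩, _, ⟨x, hx, rfl⟩, rfl⟩
    refine ⟨⟨(hC r hr0 _).2 hx, ?_⟩, smul_ne_zero hr0.ne' (ne_zero_of_mem_unit_sphere x)⟩
    rwa [norm_smul, norm_eq_of_mem_sphere, mul_one, Real.norm_of_nonneg hr0.le]
  · rintro ⟨⟨hy, hy1⟩, hy0⟩
    have hpos : 0 < ‖y‖ := norm_pos_iff.2 hy0
    refine ⟨‖y‖, ⟨hpos, hy1⟩, ‖y‖⁻¹ • y, ⟨⟨‖y‖⁻¹ • y, ?_⟩, ?_, rfl⟩, smul_inv_smul₀ hpos.ne' y⟩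
    · simp [norm_smul, hpos.ne']
    · exact (hC _ (inv_pos.2 hpos) y).2 hy

variable [FiniteDimensional ℝ E] [MeasurableSpace E] [BorelSpace E] (μ : Measure E)
  [μ.IsAddHaarMeasure]

theorem toSphere_preimage_of_smul_mem_iff {C : Set E} (hmeas : MeasurableSet C)
    (hC : ∀ r : ℝ, 0 < r → ∀ x, r • x ∈ C ↔ x ∈ C) :
    μ.toSphere ((↑) ⁻¹' C) = finrank ℝ E * μ (C ∩ ball 0 1) := by
  nontriviality E
  rw [Measure.toSphere_apply' _ (measurable_subtype_coe hmeas), Ioo_smul_image_sphere_preimage hC,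
    measure_sdiff_null (measure_singleton _)]

lemma addHaar_norm_sq_lt [Nontrivial E] (r : ℝ) :
    μ {x | ‖x‖ ^ 2 < r} = ENNReal.ofReal (finrank ℝ E / 2) * μ (ball 0 1) *
      powerMeasure (finrank ℝ E / 2) (Iio r) := by
  rcases le_or_gt r 0 with hr | hr
  · have hempty : {x : E | ‖x‖ ^ 2 < r} = ∅ :=
      eq_empty_of_forall_notMem fun x hx ↦ (hx.trans_le hr).not_ge (sq_nonneg _)
    have hzero : powerMeasure (finrank ℝ E / 2) (Iio 0) = 0 := by
      rw [powerMeasure_Iio (half_finrank_pos E) le_rfl, Real.zero_rpow (half_finrank_pos E).ne',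
        zero_div, ENNReal.ofReal_zero]
    rw [hempty, measure_empty, measure_mono_null (Iio_subset_Iio hr) hzero, mul_zero]
  · have hball : {x : E | ‖x‖ ^ 2 < r} = ball 0 √r := by
      ext x
      rw [mem_ofPred_eq, mem_ball_zero_iff, Real.lt_sqrt (norm_nonneg x)]
    rw [hball, Measure.addHaar_ball _ _ (Real.sqrt_nonneg r),
      powerMeasure_Iio (half_finrank_pos E) hr.le, mul_right_comm,
      ← ENNReal.ofReal_mul (half_finrank_pos E).le, mul_div_cancel₀ _ (half_finrank_pos E).ne',
      Real.sqrt_eq_rpow, ← Real.rpow_mul_natCast hr.le, one_div_mul_eq_div]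

theorem map_norm_sq_addHaar [Nontrivial E] :
    μ.map (fun x ↦ ‖x‖ ^ 2) = (ENNReal.ofReal (finrank ℝ E / 2) * μ (ball 0 1)) •
      powerMeasure (finrank ℝ E / 2) := by
  have hIio (r : ℝ) : μ.map (fun x ↦ ‖x‖ ^ 2) (Iio r) =
      ((ENNReal.ofReal (finrank ℝ E / 2) * μ (ball 0 1)) •
        powerMeasure (finrank ℝ E / 2)) (Iio r) := by
    rw [Measure.map_apply (by fun_prop) measurableSet_Iio, Measure.smul_apply, smul_eq_mul,
      ← addHaar_norm_sq_lt]
    rfl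
  have hfin (r : ℝ) : μ.map (fun x ↦ ‖x‖ ^ 2) (Iio r) ≠ ∞ := by
    rw [hIio, Measure.smul_apply, smul_eq_mul]
    exact ENNReal.mul_ne_top (ENNReal.mul_ne_top ENNReal.ofReal_ne_top measure_ball_lt_top.ne)
      (powerMeasure_Iio_ne_top (half_finrank_pos E) r)
  refine Measure.ext_of_Ico' _ _
    (fun a b _ ↦ measure_ne_top_of_subset Ico_subset_Iio_self (hfin b)) fun a b hab ↦ ?_
  have hsub : Iio a ⊆ Iio b := Iio_subset_Iio hab.le
  rw [← Iio_sdiff_Iio, measure_sdiff hsub nullMeasurableSet_Iio (hfin a),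
    measure_sdiff hsub nullMeasurableSet_Iio (hIio a ▸ hfin a), hIio, hIio]

end Sphere

section Coisometry

variable {E F : Type*} [NormedAddCommGroup E] [InnerProductSpace ℝ E] [FiniteDimensional ℝ E]
  [NormedAddCommGroup F] [InnerProductSpace ℝ F] [FiniteDimensional ℝ F] {T : E →ₗ[ℝ] F}

lemma norm_orthogonalProjectionOnto_range_adjoint (hT : T ∘ₗ T.adjoint = .id) (x : E) :
    ‖(LinearMap.range T.adjoint).orthogonalProjectionOnto x‖ = ‖T x‖ := by
  have hTT (y : F) : T (T.adjoint y) = y := LinearMap.congr_fun hT y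
  have hproj : (LinearMap.range T.adjoint).starProjection x = T.adjoint (T x) := by
    refine Submodule.eq_starProjection_of_mem_of_inner_eq_zero ⟨T x, rfl⟩ ?_
    rintro _ ⟨y, rfl⟩
    rw [LinearMap.adjoint_inner_right, map_sub, hTT, sub_self, inner_zero_left]
  have hnorm (y : F) : ‖T.adjoint y‖ = ‖y‖ := by
    rw [← sq_eq_sq₀ (norm_nonneg _) (norm_nonneg _), ← real_inner_self_eq_norm_sq,
      ← real_inner_self_eq_norm_sq, LinearMap.adjoint_inner_left, hTT]
  rw [← hnorm, ← hproj]
  rfl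

lemma finrank_range_adjoint (hT : T ∘ₗ T.adjoint = .id) :
    finrank ℝ (LinearMap.range T.adjoint) = finrank ℝ F :=
  LinearMap.finrank_range_of_inj (Function.LeftInverse.injective (LinearMap.congr_fun hT))

end Coisometry

section UniformSphere

variable {E : Type*} [NormedAddCommGroup E] [InnerProductSpace ℝ E] [FiniteDimensional ℝ E]
  [MeasurableSpace E] [BorelSpace E]

variable (E) in
/-- The uniform probability measure on the unit sphere of `E`: the surface measure divided by its
total mass. -/
noncomputable def uniformSphere : Measure (sphere (0 : E) 1) :=
  ((volume : Measure E).toSphere univ)⁻¹ • (volume : Measure E).toSphere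

instance [Nontrivial E] : IsProbabilityMeasure (uniformSphere E) := by
  have : NeZero (volume : Measure E).toSphere := ⟨Measure.toSphere_ne_zero _⟩
  unfold uniformSphere
  infer_instance

lemma measurePreserving_orthogonalProjectionOnto_prodMk (K : Submodule ℝ E) :
    MeasurePreserving fun x ↦ (K.orthogonalProjectionOnto x, Kᗮ.orthogonalProjectionOnto x) := by
  convert! (WithLp.volume_preserving_ofLp K Kᗮ).comp K.orthogonalDecomposition.measurePreserving
  simp

theorem exists_map_norm_sq_orthogonalProjectionOnto (K : Submodule ℝ E) [Nontrivial K]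
    [Nontrivial Kᗮ] :
    ∃ c : ℝ≥0∞, (volume : Measure E).map
        (fun x ↦ (‖K.orthogonalProjectionOnto x‖ ^ 2 / ‖x‖ ^ 2, ‖x‖ ^ 2)) =
      c • (betaMeasure (finrank ℝ K / 2) (finrank ℝ Kᗮ / 2)).prod
        (powerMeasure (finrank ℝ K / 2 + finrank ℝ Kᗮ / 2)) := by
  have hcomp : (fun x : E ↦ (‖K.orthogonalProjectionOnto x‖ ^ 2 / ‖x‖ ^ 2, ‖x‖ ^ 2)) =
      (fun p : ℝ × ℝ ↦ (p.1 / (p.1 + p.2), p.1 + p.2)) ∘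
        Prod.map (fun y : K ↦ ‖y‖ ^ 2) (fun z : Kᗮ ↦ ‖z‖ ^ 2) ∘
          fun x ↦ (K.orthogonalProjectionOnto x, Kᗮ.orthogonalProjectionOnto x) := by
    ext x <;> simp [K.norm_sq_eq_add_norm_sq_projection x]
  rw [hcomp, ← Measure.map_map (by fun_prop) (by fun_prop),
    ← Measure.map_map (by fun_prop) (by fun_prop),
    (measurePreserving_orthogonalProjectionOnto_prodMk K).map_eq, Measure.volume_eq_prod,
    ← Measure.map_prod_map _ _ (by fun_prop) (by fun_prop), map_norm_sq_addHaar,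
    map_norm_sq_addHaar, Measure.prod_smul_left, Measure.prod_smul_right, Measure.map_smul,
    Measure.map_smul, map_prod_powerMeasure (half_finrank_pos K) (half_finrank_pos Kᗮ),
    smul_smul, smul_smul]
  exact ⟨_, rfl⟩

theorem exists_map_norm_sq_uniformSphere_eq_smul (K : Submodule ℝ E) [Nontrivial K]
    [Nontrivial Kᗮ] :
    ∃ c : ℝ≥0∞, (uniformSphere E).map
        (fun x : sphere (0 : E) 1 ↦ ‖K.orthogonalProjectionOnto (x : E)‖ ^ 2) =
      c • betaMeasure (finrank ℝ K / 2) (finrank ℝ Kᗮ / 2) := by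
  let ratio (x : E) : ℝ := ‖K.orthogonalProjectionOnto x‖ ^ 2 / ‖x‖ ^ 2
  have hratio : Measurable ratio := by fun_prop
  have hsmul (r : ℝ) (hr : 0 < r) (x : E) : ratio (r • x) = ratio x := by
    simp only [ratio, map_smul, norm_smul, mul_pow]
    exact mul_div_mul_left _ _ (pow_ne_zero 2 (norm_ne_zero_iff.2 hr.ne'))
  obtain ⟨c, hc⟩ := exists_map_norm_sq_orthogonalProjectionOnto K
  set ν := betaMeasure (finrank ℝ K / 2) (finrank ℝ Kᗮ / 2)
  set ρ := powerMeasure (finrank ℝ K / 2 + finrank ℝ Kᗮ / 2)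
  refine ⟨((volume : Measure E).toSphere univ)⁻¹ * (finrank ℝ E * (c * ρ (Iio 1))), ?_⟩
  ext A hA
  have hcone : (fun x : sphere (0 : E) 1 ↦ ‖K.orthogonalProjectionOnto (x : E)‖ ^ 2) ⁻¹' A =
      (↑) ⁻¹' (ratio ⁻¹' A) := by
    ext x
    simp [ratio]
  have hball : ratio ⁻¹' A ∩ ball 0 1 = (fun x ↦ (ratio x, ‖x‖ ^ 2)) ⁻¹' A ×ˢ Iio 1 := by
    ext x
    simp
  have hvol : volume (ratio ⁻¹' A ∩ ball 0 1) = c * (ν A * ρ (Iio 1)) := by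
    rw [hball, ← Measure.map_apply (by fun_prop) (hA.prod measurableSet_Iio), hc,
      Measure.smul_apply, Measure.prod_prod, smul_eq_mul]
  rw [Measure.map_apply (by fun_prop) hA, hcone, uniformSphere, Measure.smul_apply,
    toSphere_preimage_of_smul_mem_iff _ (hratio hA) fun r hr x ↦ by
      rw [mem_preimage, hsmul r hr, mem_preimage], hvol, Measure.smul_apply]
  simp only [smul_eq_mul]
  ring

lemma eq_of_eq_smul_of_isProbabilityMeasure {Ω : Type*} [MeasurableSpace Ω] {μ ν : Measure Ω}
    [IsProbabilityMeasure μ] [IsProbabilityMeasure ν] {c : ℝ≥0∞} (h : μ = c • ν) : μ = ν := by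
  have hc : c = 1 := by simpa using (DFunLike.congr_fun h univ).symm
  rw [h, hc, one_smul]

theorem map_norm_sq_orthogonalProjectionOnto_uniformSphere (K : Submodule ℝ E) [Nontrivial K]
    [Nontrivial Kᗮ] :
    (uniformSphere E).map (fun x : sphere (0 : E) 1 ↦ ‖K.orthogonalProjectionOnto (x : E)‖ ^ 2) =
      betaMeasure (finrank ℝ K / 2) (finrank ℝ Kᗮ / 2) := by
  have : Nontrivial E := K.subtype_injective.nontrivial
  have := isProbabilityMeasureBeta (half_finrank_pos K) (half_finrank_pos Kᗮ)
  have := Measure.isProbabilityMeasure_map (μ := uniformSphere E)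
    (f := fun x : sphere (0 : E) 1 ↦ ‖K.orthogonalProjectionOnto (x : E)‖ ^ 2) (by fun_prop)
  obtain ⟨c, hc⟩ := exists_map_norm_sq_uniformSphere_eq_smul K
  exact eq_of_eq_smul_of_isProbabilityMeasure hc

theorem map_norm_sq_uniformSphere_of_comp_adjoint_eq_id {F : Type*} [NormedAddCommGroup F]
    [InnerProductSpace ℝ F] [FiniteDimensional ℝ F] [Nontrivial F] {T : E →ₗ[ℝ] F}
    (hT : T ∘ₗ T.adjoint = .id) (hlt : finrank ℝ F < finrank ℝ E) :
    (uniformSphere E).map (fun x : sphere (0 : E) 1 ↦ ‖T x‖ ^ 2) =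
      betaMeasure (finrank ℝ F / 2) ((finrank ℝ E - finrank ℝ F) / 2) := by
  set K := LinearMap.range T.adjoint
  have hK : finrank ℝ K = finrank ℝ F := finrank_range_adjoint hT
  have hsum : finrank ℝ K + finrank ℝ Kᗮ = finrank ℝ E := K.finrank_add_finrank_orthogonal
  have hF : 0 < finrank ℝ F := Module.finrank_pos
  have : Nontrivial K := Module.nontrivial_of_finrank_pos (R := ℝ) (by lia)
  have : Nontrivial Kᗮ := Module.nontrivial_of_finrank_pos (R := ℝ) (by lia)
  rw [← hsum, ← hK, Nat.cast_add, add_sub_cancel_left,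
    ← map_norm_sq_orthogonalProjectionOnto_uniformSphere K]
  simp only [K, norm_orthogonalProjectionOnto_range_adjoint hT]

end UniformSphere

end

/-- for an orthogonal projection `P` from `ℝⁿ` onto `ℝᵐ`, the uniform
probability measure of `{x ∈ S^{n−1} : ‖Px‖² ≤ δ}` equals the beta distribution function
`F(δ)` with parameters `α = m/2`, `β = (n−m)/2`, and `F(δ) → 1` as `δ → 1`. -/
theorem projection_beta_distribution (m n : ℕ) (hm : 0 < m) (hmn : m < n)
    (P : Matrix (Fin m) (Fin n) ℝ) (hP : P * Pᵀ = 1)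
    (α β : ℝ) (hα : α = m / 2) (hβ : β = ((n : ℝ) - m) / 2)
    (F : ℝ → ℝ)
    (hF : ∀ δ : ℝ, F δ = Real.Gamma (α + β) / (Real.Gamma α * Real.Gamma β) *
      ∫ t in (0 : ℝ)..δ, t ^ (α - 1) * (1 - t) ^ (β - 1)) :
    (∀ δ : ℝ, 0 ≤ δ → δ < 1 →
      ((((n : ℝ≥0∞) * volume (ball (0 : EuclideanSpace ℝ (Fin n)) 1))⁻¹ •
          (volume : Measure (EuclideanSpace ℝ (Fin n))).toSphere)
        {x : sphere (0 : EuclideanSpace ℝ (Fin n)) 1 |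
          ‖Matrix.toEuclideanLin P (x : EuclideanSpace ℝ (Fin n))‖ ^ 2 ≤ δ}).toReal = F δ) ∧
    Filter.Tendsto F (nhdsWithin 1 (Set.Iio 1)) (nhds 1) := by
  have hα0 : 0 < α := by rw [hα]; positivity
  have hβ0 : 0 < β := by rw [hβ]; exact half_pos (sub_pos.2 (Nat.cast_lt.2 hmn))
  have hbeta : Real.Gamma (α + β) / (Real.Gamma α * Real.Gamma β) =
      (ProbabilityTheory.beta α β)⁻¹ := (inv_div _ _).symm
  simp only [hbeta] at hF
  have : Nonempty (Fin m) := ⟨⟨0, hm⟩⟩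
  have hT : P.toEuclideanLin ∘ₗ P.toEuclideanLin.adjoint = .id := by
    rw [← toEuclideanLin_conjTranspose_eq_adjoint, conjTranspose_eq_transpose_of_trivial]
    ext x i
    simp [hP]
  have hlaw := map_norm_sq_uniformSphere_of_comp_adjoint_eq_id hT (by simpa using hmn)
  rw [finrank_euclideanSpace_fin, finrank_euclideanSpace_fin, ← hα, ← hβ, uniformSphere,
    Measure.toSphere_apply_univ, finrank_euclideanSpace_fin] at hlaw
  refine ⟨fun δ h0 h1 ↦ ?_, funext hF ▸ tendsto_inv_beta_mul_integral hα0 hβ0⟩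
  rw [hF, ← betaMeasure_real_Iic hα0 hβ0 h0 h1, ← hlaw,
    map_measureReal_apply (by fun_prop) measurableSet_Iic]
  rfl
end

section
/- For parameters α, β > 1 let B(α,β;x) = (Γ(α+β)/(Γ(α)Γ(β))) ∫_0^{min(max(x,0),1)} t^{α−1}(1−t)^{β−1} dt be the cumulative distribution function of the beta distribution (extended by 0 for x < 0 and 1 for x > 1), let E = α/(α+β), V = αβ/((α+β)²(α+β+1)), and σ = √V, and let B̃(α,β;x) = B(α,β; σx + E) be the rescaled distribution function. Then for every fixed x ∈ ℝ, B̃(α,β;x) tends to Φ(x) = (1/√(2π)) ∫_{−∞}^x e^{−t²/2} dt, the distribution function of the standard normal distribution, as α and β both go to infinity. -/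
open MeasureTheory Filter

/-- The cumulative distribution function of the beta distribution with parameters `a`, `b`,
extended by `0` for `x < 0` and by `1` for `x > 1`. -/
noncomputable def betaCDF (a b x : ℝ) : ℝ :=
  Real.Gamma (a + b) / (Real.Gamma a * Real.Gamma b) *
    ∫ t in (0 : ℝ)..(min (max x 0) 1), t ^ (a - 1) * (1 - t) ^ (b - 1)

/-- The beta distribution function rescaled to expected value `0` and variance `1`. -/
noncomputable def betaCDFrescaled (a b x : ℝ) : ℝ :=
  betaCDF a b (Real.sqrt (a * b / ((a + b) ^ 2 * (a + b + 1))) * x + a / (a + b))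

/-!
In the variable `s = (t - E) / σ` the beta density is, up to a constant factor, the product
`(1 + u s) ^ (α - 1) * (1 - w s) ^ (β - 1)`, where `u = σ / E` and `w = σ / (1 - E)`. Since
`(α - 1) u - (β - 1) w = w - u → 0` and `(α - 1) u² + (β - 1) w² → 1`, its logarithm tends to
`-s² / 2`, while `log (1 + y) ≤ y - y² / (4 (1 + |y|))` provides an integrable majorant of the
product. Dominated convergence applies to the integrals over `(-∞, x]` and over `ℝ`; the rescaled
distribution function is the quotient of the two, so the Gamma factors cancel and Stirling's
formula is not needed.
-/

open ProbabilityTheory Asymptotics Real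
open scoped Topology

section Log

lemma log_one_add_le_sub_sq_div {y : ℝ} (hy : 0 < 1 + y) :
    log (1 + y) ≤ y - y ^ 2 / (4 * (1 + |y|)) := by
  -- Apply `log w ≤ w - 1` to `w = √(1 + y)`, so that `y = (w - 1) (w + 1)`.
  obtain ⟨w, hw, hwy⟩ : ∃ w : ℝ, 0 < w ∧ w ^ 2 = 1 + y := ⟨√(1 + y), sqrt_pos.2 hy, sq_sqrt hy.le⟩
  have hlog : log (1 + y) ≤ 2 * (w - 1) := by
    rw [← hwy, log_pow]
    exact mul_le_mul_of_nonneg_left (log_le_sub_one_of_pos hw) (Nat.cast_nonneg 2)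
  have hsq : y ^ 2 / (4 * (1 + |y|)) ≤ (w - 1) ^ 2 := by
    rw [div_le_iff₀ (by positivity)]
    have hw_add : (w + 1) ^ 2 ≤ 4 * (1 + |y|) := by
      nlinarith [sq_nonneg (w - 1), le_abs_self y, abs_nonneg y]
    calc y ^ 2 = (w - 1) ^ 2 * (w + 1) ^ 2 := by rw [← mul_pow]; congr 1; linarith
      _ ≤ _ := by gcongr
  linarith

lemma log_one_add_sub_isLittleO :
    (fun y : ℝ ↦ log (1 + y) - (y - y ^ 2 / 2)) =o[𝓝 0] fun y ↦ y ^ 2 := by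
  have hcube : (fun y : ℝ ↦ log (1 + y) - (y - y ^ 2 / 2)) =O[𝓝 0] fun y ↦ y ^ 3 := by
    refine .of_bound 2 ?_
    filter_upwards [Metric.closedBall_mem_nhds (0 : ℝ) one_half_pos] with y hy
    rw [mem_closedBall_zero_iff, norm_eq_abs] at hy
    have htaylor := abs_log_sub_add_sum_range_le (x := -y) (by rw [abs_neg]; linarith) 2
    have hsum : ∑ i ∈ Finset.range 2, (-y) ^ (i + 1) / ((i : ℝ) + 1) + log (1 - -y) =
        log (1 + y) - (y - y ^ 2 / 2) := by
      rw [sub_neg_eq_add, Finset.sum_range_succ, Finset.sum_range_one]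
      push_cast
      ring
    rw [hsum, abs_neg] at htaylor
    rw [norm_eq_abs, norm_pow, norm_eq_abs]
    refine htaylor.trans ((div_le_iff₀ (by linarith)).2 ?_)
    calc |y| ^ 3 = 2 * |y| ^ 3 * (1 / 2) := by ring
      _ ≤ 2 * |y| ^ 3 * (1 - |y|) := by gcongr; linarith
  exact hcube.trans_isLittleO (isLittleO_pow_pow (by norm_num))

lemma tendsto_mul_log_one_add_sub {κ : Type*} {l : Filter κ} {c u : κ → ℝ}
    (hu : Tendsto u l (𝓝 0)) (hcu : (fun k ↦ c k * u k ^ 2) =O[l] (1 : κ → ℝ)) :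
    Tendsto (fun k ↦ c k * (log (1 + u k) - (u k - u k ^ 2 / 2))) l (𝓝 0) :=
  (isLittleO_one_iff ℝ).1 <|
    ((isBigO_refl c l).mul_isLittleO (log_one_add_sub_isLittleO.comp_tendsto hu)).trans_isBigO hcu

end Log

lemma integrable_exp_neg_mul_abs {b : ℝ} (hb : 0 < b) : Integrable fun s : ℝ ↦ exp (-b * |s|) := by
  have h := (integrable_fun_norm_addHaar (volume : Measure ℝ) (f := fun r ↦ exp (-b * r))).2
  simpa using h (by simpa using integrableOn_exp_mul_Ioi (neg_lt_zero.2 hb) 0)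

lemma integral_exp_neg_sq_div_two : ∫ s : ℝ, exp (-s ^ 2 / 2) = √(2 * π) := by
  convert integral_gaussian (1 / 2) using 3 <;> ring_nf

lemma setIntegral_Iic_comp_mul_add {E : Type*} [NormedAddCommGroup E] [NormedSpace ℝ E]
    (f : ℝ → E) {σ : ℝ} (hσ : 0 < σ) (m x : ℝ) :
    ∫ s in Set.Iic x, f (σ * s + m) = σ⁻¹ • ∫ t in Set.Iic (σ * x + m), f t := by
  have hind (s : ℝ) : (Set.Iic x).indicator (fun s ↦ f (σ * s + m)) s =
      (Set.Iic (σ * x + m)).indicator f (σ * s + m) := by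
    simp [Set.indicator_apply, hσ]
  rw [← integral_indicator measurableSet_Iic, ← integral_indicator measurableSet_Iic]
  simp_rw [hind]
  rw [Measure.integral_comp_mul_left (fun t ↦ (Set.Iic (σ * x + m)).indicator f (t + m)) σ,
    integral_add_right_eq_self, abs_of_pos (inv_pos.2 hσ)]

section AffineRpowProd

variable {ι : Type*} [Fintype ι]

/-- The product of the powers, with exponents `c i`, of the affine functions `s ↦ 1 + u i * s`: the
beta density up to an affine change of variable and a constant factor. Taking positive parts makes
it vanish off the region where all the affine functions are positive, provided that `c i > 0`. -/
noncomputable def affineRpowProd (c u : ι → ℝ) (s : ℝ) : ℝ :=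
  ∏ i, max (1 + u i * s) 0 ^ c i

lemma affineRpowProd_nonneg (c u : ι → ℝ) (s : ℝ) : 0 ≤ affineRpowProd c u s :=
  Finset.prod_nonneg fun _ _ ↦ rpow_nonneg (le_max_right _ _) _

lemma measurable_affineRpowProd (c u : ι → ℝ) : Measurable (affineRpowProd c u) := by
  unfold affineRpowProd
  fun_prop

lemma affineRpowProd_eq_exp {c u : ι → ℝ} {s : ℝ} (h : ∀ i, 0 < 1 + u i * s) :
    affineRpowProd c u s = exp (∑ i, c i * log (1 + u i * s)) := by
  rw [affineRpowProd, exp_sum]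
  refine Finset.prod_congr rfl fun i _ ↦ ?_
  rw [max_eq_left (h i).le, rpow_def_of_pos (h i), mul_comm]

lemma max_one_add_rpow_le {c y : ℝ} (hc : 0 < c) :
    max (1 + y) 0 ^ c ≤ exp (c * (y - y ^ 2 / (4 * (1 + |y|)))) := by
  rcases le_or_gt (1 + y) 0 with hy | hy
  · rw [max_eq_right hy, zero_rpow hc.ne']
    positivity
  · rw [max_eq_left hy.le, rpow_def_of_pos hy, mul_comm]
    gcongr
    exact log_one_add_le_sub_sq_div hy

lemma affineRpowProd_le {c u : ι → ℝ} (hc : ∀ i, 0 < c i) (hu : ∀ i, |u i| ≤ 1) (s : ℝ) :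
    affineRpowProd c u s ≤
      exp ((∑ i, c i * u i) * s - (∑ i, c i * u i ^ 2) * (s ^ 2 / (4 * (1 + |s|)))) := by
  have hfactor (i : ι) : max (1 + u i * s) 0 ^ c i ≤
      exp (c i * u i * s - c i * u i ^ 2 * (s ^ 2 / (4 * (1 + |s|)))) := by
    refine (max_one_add_rpow_le (hc i)).trans (exp_le_exp.2 ?_)
    have habs : |u i * s| ≤ |s| := by
      rw [abs_mul]
      exact mul_le_of_le_one_left (abs_nonneg s) (hu i)
    calc c i * (u i * s - (u i * s) ^ 2 / (4 * (1 + |u i * s|)))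
        ≤ c i * (u i * s - (u i * s) ^ 2 / (4 * (1 + |s|))) := by
          have := hc i
          gcongr
      _ = _ := by ring
  calc affineRpowProd c u s
      ≤ ∏ i, exp (c i * u i * s - c i * u i ^ 2 * (s ^ 2 / (4 * (1 + |s|)))) :=
        Finset.prod_le_prod (fun _ _ ↦ rpow_nonneg (le_max_right _ _) _) fun i _ ↦ hfactor i
    _ = _ := by rw [← exp_sum, Finset.sum_sub_distrib, ← Finset.sum_mul, ← Finset.sum_mul]

variable {κ : Type*} {l : Filter κ} {c u : κ → ι → ℝ}

lemma tendsto_affineRpowProd (hc : ∀ᶠ k in l, ∀ i, 0 ≤ c k i)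
    (hu : ∀ i, Tendsto (fun k ↦ u k i) l (𝓝 0))
    (hlin : Tendsto (fun k ↦ ∑ i, c k i * u k i) l (𝓝 0))
    (hquad : Tendsto (fun k ↦ ∑ i, c k i * u k i ^ 2) l (𝓝 1)) (s : ℝ) :
    Tendsto (fun k ↦ affineRpowProd (c k) (u k) s) l (𝓝 (exp (-s ^ 2 / 2))) := by
  have hus (i : ι) : Tendsto (fun k ↦ u k i * s) l (𝓝 0) := by
    simpa using (hu i).mul_const s
  have hbounded (i : ι) : (fun k ↦ c k i * (u k i * s) ^ 2) =O[l] (1 : κ → ℝ) := by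
    refine IsBigO.trans (.of_bound (s ^ 2) ?_) (hquad.isBigO_one ℝ)
    filter_upwards [hc] with k hk
    have hterm (j : ι) : 0 ≤ c k j * u k j ^ 2 := mul_nonneg (hk j) (sq_nonneg _)
    have hle : c k i * u k i ^ 2 ≤ ∑ j, c k j * u k j ^ 2 :=
      Finset.single_le_sum (fun j _ ↦ hterm j) (Finset.mem_univ i)
    rw [norm_of_nonneg (mul_nonneg (hk i) (sq_nonneg _)), norm_of_nonneg ((hterm i).trans hle)]
    calc c k i * (u k i * s) ^ 2 = s ^ 2 * (c k i * u k i ^ 2) := by ring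
      _ ≤ _ := by gcongr
  have hremainder := tendsto_finsetSum Finset.univ fun i _ ↦
    tendsto_mul_log_one_add_sub (hus i) (hbounded i)
  have hexponent : Tendsto (fun k ↦ ∑ i, c k i * log (1 + u k i * s)) l (𝓝 (-s ^ 2 / 2)) := by
    convert hremainder.add ((hlin.mul_const s).sub (hquad.mul_const (s ^ 2 / 2))) using 2 with k
    · simp_rw [Finset.sum_mul, ← Finset.sum_sub_distrib, ← Finset.sum_add_distrib]
      exact Finset.sum_congr rfl fun i _ ↦ by ring
    · simp only [Finset.sum_const_zero]
      ring
  refine ((continuous_exp.tendsto _).comp hexponent).congr' ?_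
  have hpos : ∀ᶠ k in l, ∀ i, -1 < u k i * s :=
    eventually_all.2 fun i ↦ (hus i).eventually_const_lt neg_one_lt_zero
  filter_upwards [hpos] with k hk
  exact (affineRpowProd_eq_exp fun i ↦ by linarith [hk i]).symm

lemma eventually_affineRpowProd_le_exp (hc : ∀ᶠ k in l, ∀ i, 0 < c k i)
    (hu : ∀ i, Tendsto (fun k ↦ u k i) l (𝓝 0))
    (hlin : Tendsto (fun k ↦ ∑ i, c k i * u k i) l (𝓝 0))
    (hquad : Tendsto (fun k ↦ ∑ i, c k i * u k i ^ 2) l (𝓝 1)) :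
    ∀ᶠ k in l, ∀ s, affineRpowProd (c k) (u k) s ≤ exp (1 / 8) * exp (-(1 / 16) * |s|) := by
  have hu_le : ∀ᶠ k in l, ∀ i, |u k i| ≤ 1 :=
    eventually_all.2 fun i ↦ ((hu i).abs.eventually_lt_const (by simp)).mono fun _ h ↦ h.le
  have hlin_le : ∀ᶠ k in l, |∑ i, c k i * u k i| < 1 / 16 :=
    hlin.abs.eventually_lt_const (by norm_num)
  have hquad_ge : ∀ᶠ k in l, 1 / 2 < ∑ i, c k i * u k i ^ 2 :=
    hquad.eventually_const_lt (by norm_num)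
  filter_upwards [hc, hu_le, hlin_le, hquad_ge] with k hck huk hlink hquadk s
  refine (affineRpowProd_le hck huk s).trans ?_
  rw [← exp_add, exp_le_exp]
  have hlinear : (∑ i, c k i * u k i) * s ≤ 1 / 16 * |s| :=
    (le_abs_self _).trans (by rw [abs_mul]; gcongr)
  have hfrac : (|s| - 1) / 4 ≤ s ^ 2 / (4 * (1 + |s|)) := by
    rw [div_le_div_iff₀ (by norm_num) (by positivity), ← sq_abs s]
    nlinarith
  have hquadratic : 1 / 2 * (s ^ 2 / (4 * (1 + |s|))) ≤
      (∑ i, c k i * u k i ^ 2) * (s ^ 2 / (4 * (1 + |s|))) := by gcongr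
  linarith

lemma tendsto_setIntegral_affineRpowProd [l.IsCountablyGenerated]
    (hc : ∀ᶠ k in l, ∀ i, 0 < c k i) (hu : ∀ i, Tendsto (fun k ↦ u k i) l (𝓝 0))
    (hlin : Tendsto (fun k ↦ ∑ i, c k i * u k i) l (𝓝 0))
    (hquad : Tendsto (fun k ↦ ∑ i, c k i * u k i ^ 2) l (𝓝 1)) (S : Set ℝ) :
    Tendsto (fun k ↦ ∫ s in S, affineRpowProd (c k) (u k) s) l
      (𝓝 (∫ s in S, exp (-s ^ 2 / 2))) := by
  refine tendsto_integral_filter_of_dominated_convergence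
    (fun s ↦ exp (1 / 8) * exp (-(1 / 16) * |s|))
    (.of_forall fun k ↦ (measurable_affineRpowProd _ _).aestronglyMeasurable) ?_
    ((integrable_exp_neg_mul_abs (by norm_num)).const_mul _).restrict
    (.of_forall (tendsto_affineRpowProd (hc.mono fun _ h i ↦ (h i).le) hu hlin hquad))
  filter_upwards [eventually_affineRpowProd_le_exp hc hu hlin hquad] with k hk
  exact .of_forall fun s ↦ by simpa [abs_of_nonneg (affineRpowProd_nonneg _ _ _)] using hk s

lemma tendsto_setIntegral_div_integral_affineRpowProd [l.IsCountablyGenerated]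
    (hc : ∀ᶠ k in l, ∀ i, 0 < c k i) (hu : ∀ i, Tendsto (fun k ↦ u k i) l (𝓝 0))
    (hlin : Tendsto (fun k ↦ ∑ i, c k i * u k i) l (𝓝 0))
    (hquad : Tendsto (fun k ↦ ∑ i, c k i * u k i ^ 2) l (𝓝 1)) (S : Set ℝ) :
    Tendsto (fun k ↦ (∫ s in S, affineRpowProd (c k) (u k) s) / ∫ s, affineRpowProd (c k) (u k) s)
      l (𝓝 ((√(2 * π))⁻¹ * ∫ s in S, exp (-s ^ 2 / 2))) := by
  have htotal := tendsto_setIntegral_affineRpowProd hc hu hlin hquad Set.univ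
  simp only [setIntegral_univ, integral_exp_neg_sq_div_two] at htotal
  rw [← div_eq_inv_mul]
  exact (tendsto_setIntegral_affineRpowProd hc hu hlin hquad S).div htotal (by positivity)

end AffineRpowProd

section BetaDistribution

lemma betaCDF_eq_setIntegral (a b y : ℝ) :
    betaCDF a b y = ∫ t in Set.Iic y, betaPDFReal a b t := by
  have hpdf : betaPDFReal a b = (Set.Ioo 0 1).indicator
      fun t ↦ Gamma (a + b) / (Gamma a * Gamma b) * (t ^ (a - 1) * (1 - t) ^ (b - 1)) := by
    ext t
    simp only [betaPDFReal, beta, one_div_div, mul_assoc, Set.indicator_apply, Set.mem_Ioo]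
  have hset : Set.Ioc 0 (min (max y 0) 1) = Set.Iic y ∩ Set.Ioc 0 1 := by
    ext t
    simp only [Set.mem_Ioc, Set.mem_inter_iff, Set.mem_Iic, le_min_iff, le_max_iff]
    grind
  rw [betaCDF, intervalIntegral.integral_of_le (by positivity), ← integral_const_mul, hset, hpdf,
    setIntegral_indicator measurableSet_Ioo]
  exact setIntegral_congr_set ((ae_eq_refl _).inter Ioo_ae_eq_Ioc.symm)

lemma integral_betaPDFReal_eq_one {a b : ℝ} (ha : 0 < a) (hb : 0 < b) :
    ∫ t, betaPDFReal a b t = 1 := by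
  have hnonneg (t : ℝ) : 0 ≤ betaPDFReal a b t := by
    by_cases ht : 0 < t ∧ t < 1
    · exact (betaPDFReal_pos ht.1 ht.2 ha hb).le
    · rw [betaPDFReal, if_neg ht]
  rw [integral_eq_lintegral_of_nonneg_ae (.of_forall hnonneg)
    (stronglyMeasurable_betaPDFReal a b).aestronglyMeasurable]
  exact (congrArg ENNReal.toReal (lintegral_betaPDF_eq_one ha hb)).trans ENNReal.toReal_one

lemma betaPDFReal_eq_max_rpow {a b : ℝ} (ha : 1 < a) (hb : 1 < b) (t : ℝ) :
    betaPDFReal a b t = 1 / beta a b * max t 0 ^ (a - 1) * max (1 - t) 0 ^ (b - 1) := by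
  rw [betaPDFReal]
  split_ifs with ht
  · rw [max_eq_left ht.1.le, max_eq_left (sub_nonneg.2 ht.2.le)]
  · rcases not_and_or.1 ht with h | h
    · rw [max_eq_right (not_lt.1 h), zero_rpow (sub_pos.2 ha).ne']
      ring
    · rw [max_eq_right (a := 1 - t) (by linarith), zero_rpow (sub_pos.2 hb).ne']
      ring

/-- The standard deviation of the beta distribution with parameters `a` and `b`. -/
noncomputable def betaStdDev (a b : ℝ) : ℝ :=
  √(a * b / ((a + b) ^ 2 * (a + b + 1)))

/-- The coefficient of variation (standard deviation divided by mean) of the beta distribution with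
parameters `a` and `b`. As reflection in `1 / 2` exchanges the parameters, `betaCV b a` is the
standard deviation divided by one minus the mean. -/
noncomputable def betaCV (a b : ℝ) : ℝ :=
  betaStdDev a b / (a / (a + b))

lemma betaStdDev_comm (a b : ℝ) : betaStdDev a b = betaStdDev b a := by
  rw [betaStdDev, betaStdDev, mul_comm a b, add_comm a b]

variable {a b : ℝ}

lemma betaStdDev_pos (ha : 0 < a) (hb : 0 < b) : 0 < betaStdDev a b :=
  sqrt_pos.2 (by positivity)

lemma mul_betaCV_comm (ha : 0 < a) (hb : 0 < b) : a * betaCV a b = b * betaCV b a := by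
  rw [betaCV, betaCV, betaStdDev_comm b a]
  field_simp
  ring

lemma mul_betaCV_sq (ha : 0 < a) (hb : 0 < b) : a * betaCV a b ^ 2 = b / (a + b + 1) := by
  rw [betaCV, div_pow, betaStdDev, sq_sqrt (by positivity)]
  field_simp

lemma betaCV_le_sqrt_inv (ha : 0 < a) (hb : 0 < b) : betaCV a b ≤ √a⁻¹ := by
  refine le_sqrt_of_sq_le ((le_inv_mul_iff₀ ha).2 ?_ |>.trans_eq (mul_one _))
  rw [mul_betaCV_sq ha hb]
  exact div_le_one_of_le₀ (by linarith) (by linarith)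

lemma betaStdDev_mul_add (ha : 0 < a) (hb : 0 < b) (s : ℝ) :
    betaStdDev a b * s + a / (a + b) = a / (a + b) * (1 + betaCV a b * s) := by
  rw [betaCV]
  field_simp
  ring

lemma one_sub_betaStdDev_mul_add (ha : 0 < a) (hb : 0 < b) (s : ℝ) :
    1 - (betaStdDev a b * s + a / (a + b)) = b / (a + b) * (1 + -betaCV b a * s) := by
  rw [betaCV, betaStdDev_comm b a]
  field_simp
  ring

lemma betaPDFReal_betaStdDev_mul_add (ha : 1 < a) (hb : 1 < b) (s : ℝ) :
    betaPDFReal a b (betaStdDev a b * s + a / (a + b)) =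
      1 / beta a b * (a / (a + b)) ^ (a - 1) * (b / (a + b)) ^ (b - 1) *
        affineRpowProd ![a - 1, b - 1] ![betaCV a b, -betaCV b a] s := by
  have ha₀ : 0 < a := by linarith
  have hb₀ : 0 < b := by linarith
  have hmax {r : ℝ} (hr : 0 ≤ r) (y : ℝ) : max (r * y) 0 = r * max y 0 := by
    rw [mul_max_of_nonneg _ _ hr, mul_zero]
  have hmean : 0 ≤ a / (a + b) := by positivity
  have hmean' : 0 ≤ b / (a + b) := by positivity
  rw [betaPDFReal_eq_max_rpow ha hb, one_sub_betaStdDev_mul_add ha₀ hb₀,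
    betaStdDev_mul_add ha₀ hb₀, hmax hmean, hmax hmean',
    mul_rpow hmean (le_max_right _ _), mul_rpow hmean' (le_max_right _ _), affineRpowProd,
    Fin.prod_univ_two]
  simp only [Matrix.cons_val_zero, Matrix.cons_val_one]
  ring

lemma betaCDFrescaled_eq_div_integral_betaPDFReal (ha : 0 < a) (hb : 0 < b) (x : ℝ) :
    betaCDFrescaled a b x =
      (∫ s in Set.Iic x, betaPDFReal a b (betaStdDev a b * s + a / (a + b))) /
        ∫ s, betaPDFReal a b (betaStdDev a b * s + a / (a + b)) := by
  have hσ := betaStdDev_pos ha hb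
  have htotal : ∫ s, betaPDFReal a b (betaStdDev a b * s + a / (a + b)) = (betaStdDev a b)⁻¹ := by
    rw [Measure.integral_comp_mul_left (fun t ↦ betaPDFReal a b (t + a / (a + b))),
      integral_add_right_eq_self, integral_betaPDFReal_eq_one ha hb, abs_of_pos (inv_pos.2 hσ),
      smul_eq_mul, mul_one]
  rw [htotal, setIntegral_Iic_comp_mul_add _ hσ, smul_eq_mul,
    mul_div_cancel_left₀ _ (inv_ne_zero hσ.ne'), ← betaCDF_eq_setIntegral]
  rfl

lemma betaCDFrescaled_eq_div_integral_affineRpowProd (ha : 1 < a) (hb : 1 < b) (x : ℝ) :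
    betaCDFrescaled a b x =
      (∫ s in Set.Iic x, affineRpowProd ![a - 1, b - 1] ![betaCV a b, -betaCV b a] s) /
        ∫ s, affineRpowProd ![a - 1, b - 1] ![betaCV a b, -betaCV b a] s := by
  have ha₀ : 0 < a := by linarith
  have hb₀ : 0 < b := by linarith
  have hbeta := beta_pos ha₀ hb₀
  rw [betaCDFrescaled_eq_div_integral_betaPDFReal ha₀ hb₀]
  simp_rw [betaPDFReal_betaStdDev_mul_add ha hb, integral_const_mul]
  exact mul_div_mul_left _ _ (by positivity)

end BetaDistribution

section Limits

lemma eventually_one_lt_and_one_lt :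
    ∀ᶠ p : ℝ × ℝ in atTop ×ˢ atTop, 1 < p.1 ∧ 1 < p.2 :=
  (eventually_gt_atTop 1).prod_mk (eventually_gt_atTop 1)

lemma tendsto_betaCV :
    Tendsto (fun p : ℝ × ℝ ↦ betaCV p.1 p.2) (atTop ×ˢ atTop) (𝓝 0) := by
  have hsqrt : Tendsto (fun p : ℝ × ℝ ↦ √p.1⁻¹) (atTop ×ˢ atTop) (𝓝 0) := by
    simpa using (tendsto_inv_atTop_zero.comp tendsto_fst).sqrt
  refine squeeze_zero' ?_ ?_ hsqrt
  all_goals filter_upwards [eventually_one_lt_and_one_lt] with p ⟨ha, hb⟩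
  · have := betaStdDev_pos (zero_lt_one.trans ha) (zero_lt_one.trans hb)
    rw [betaCV]
    positivity
  · exact betaCV_le_sqrt_inv (zero_lt_one.trans ha) (zero_lt_one.trans hb)

lemma tendsto_betaCV_swap :
    Tendsto (fun p : ℝ × ℝ ↦ betaCV p.2 p.1) (atTop ×ˢ atTop) (𝓝 0) :=
  tendsto_betaCV.comp (tendsto_snd.prodMk tendsto_fst)

lemma tendsto_sub_one_mul_betaCV_sub :
    Tendsto (fun p : ℝ × ℝ ↦ (p.1 - 1) * betaCV p.1 p.2 - (p.2 - 1) * betaCV p.2 p.1)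
      (atTop ×ˢ atTop) (𝓝 0) := by
  have h := tendsto_betaCV_swap.sub tendsto_betaCV
  rw [sub_zero] at h
  refine h.congr' ?_
  filter_upwards [eventually_one_lt_and_one_lt] with p ⟨ha, hb⟩
  linear_combination -mul_betaCV_comm (zero_lt_one.trans ha) (zero_lt_one.trans hb)

lemma tendsto_sub_one_mul_betaCV_sq_add :
    Tendsto (fun p : ℝ × ℝ ↦ (p.1 - 1) * betaCV p.1 p.2 ^ 2 + (p.2 - 1) * betaCV p.2 p.1 ^ 2)
      (atTop ×ˢ atTop) (𝓝 1) := by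
  have hinv : Tendsto (fun p : ℝ × ℝ ↦ (p.1 + p.2 + 1)⁻¹) (atTop ×ˢ atTop) (𝓝 0) :=
    tendsto_inv_atTop_zero.comp <|
      tendsto_atTop_add_const_right _ _ (tendsto_fst.atTop_add_atTop tendsto_snd)
  have h := (hinv.const_sub 1).sub ((tendsto_betaCV.pow 2).add (tendsto_betaCV_swap.pow 2))
  rw [show (1 : ℝ) - 0 - (0 ^ 2 + 0 ^ 2) = 1 by norm_num] at h
  refine h.congr' ?_
  filter_upwards [eventually_one_lt_and_one_lt] with p ⟨ha, hb⟩
  have ha₀ : 0 < p.1 := by linarith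
  have hb₀ : 0 < p.2 := by linarith
  have hsum : p.2 / (p.1 + p.2 + 1) + p.1 / (p.2 + p.1 + 1) = 1 - (p.1 + p.2 + 1)⁻¹ := by
    rw [add_comm p.2 p.1]
    field_simp
    ring
  linear_combination -hsum - mul_betaCV_sq ha₀ hb₀ - mul_betaCV_sq hb₀ ha₀

end Limits

/-- the rescaled beta distribution functions converge pointwise to the
distribution function of the standard normal distribution as both parameters tend to
infinity. -/
theorem betaCDFrescaled_tendsto_gaussian (x : ℝ) :
    Tendsto (fun p : ℝ × ℝ => betaCDFrescaled p.1 p.2 x) (atTop ×ˢ atTop)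
      (nhds ((Real.sqrt (2 * Real.pi))⁻¹ * ∫ t in Set.Iic x, Real.exp (-t ^ 2 / 2))) := by
  have h := tendsto_setIntegral_div_integral_affineRpowProd
    (l := (atTop ×ˢ atTop : Filter (ℝ × ℝ))) (c := fun p ↦ ![p.1 - 1, p.2 - 1])
    (u := fun p ↦ ![betaCV p.1 p.2, -betaCV p.2 p.1])
    (eventually_one_lt_and_one_lt.mono fun p hp ↦
      Fin.forall_fin_two.2 ⟨sub_pos.2 hp.1, sub_pos.2 hp.2⟩)
    (Fin.forall_fin_two.2 ⟨tendsto_betaCV, by simpa using tendsto_betaCV_swap.neg⟩)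
    (by simpa [Fin.sum_univ_two, sub_eq_add_neg] using tendsto_sub_one_mul_betaCV_sub)
    (by simpa [Fin.sum_univ_two] using tendsto_sub_one_mul_betaCV_sq_add) (Set.Iic x)
  refine h.congr' ?_
  filter_upwards [eventually_one_lt_and_one_lt] with p hp
  exact (betaCDFrescaled_eq_div_integral_affineRpowProd hp.1 hp.2 x).symm
end

section
/- Let m < n, let P be a real (m×n)-matrix that is an orthogonal projection (P Pᵗ = I_m), let ξ = m/n, and define φ(ϑ) = √ϑ · exp((1−ϑ)/2). Then for every δ with 0 < δ < ξ, the uniform probability measure of the set {x ∈ S^{n−1} : ‖Px‖² ≤ δ ‖x‖²} is at most φ(δ/ξ)^m, and for every δ with ξ < δ < 1, the uniform probability measure of the set {x ∈ S^{n−1} : ‖Px‖² > δ ‖x‖²} is at most φ(δ/ξ)^m. -/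
open MeasureTheory Metric Matrix
open scoped ENNReal

/-!
Let `L` be a coisometry from an `n`-dimensional onto an `m`-dimensional Euclidean space. The map `T`
that scales `(ker L)ᗮ` by `α` and `ker L` by `β` has determinant `α ^ m * β ^ (n - m)` and satisfies
`‖T x‖² = β² ‖x‖² + (α² - β²) ‖L x‖²`. The truncated cone over the points of the sphere with
`‖T x‖ ≤ 1` is contained in the preimage under `T` of the unit ball, so these points make up at most
the fraction `(det T)⁻¹` of the sphere. Choosing `α² = ξ / δ` and `β² = (1 - ξ) / (1 - δ)` puts the
points with `‖L x‖² = δ` exactly on the boundary `‖T x‖ = 1`, and the condition `‖T x‖ ≤ 1` becomes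
`(ξ - δ) (‖L x‖² - δ) ≤ 0`, which covers both tails. Finally `1 + t ≤ exp t` bounds `β⁻¹`.
-/

section Determinant

variable {R M N : Type*} [CommRing R] [AddCommGroup M] [Module R M] [Module.Free R M]
  [Module.Finite R M] [AddCommGroup N] [Module R N] [Module.Free R N] [Module.Finite R N]

theorem det_id_add_comp_comm (f : M →ₗ[R] N) (g : N →ₗ[R] M) :
    LinearMap.det (LinearMap.id + g ∘ₗ f) = LinearMap.det (LinearMap.id + f ∘ₗ g) := by
  classical
  let b := Module.Free.chooseBasis R M
  let c := Module.Free.chooseBasis R N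
  rw [← LinearMap.det_toMatrix b, ← LinearMap.det_toMatrix c, map_add, map_add,
    LinearMap.toMatrix_comp b c b, LinearMap.toMatrix_comp c b c, LinearMap.toMatrix_id,
    LinearMap.toMatrix_id, det_one_add_mul_comm]

end Determinant

section Coisometry

variable {E F : Type*} [NormedAddCommGroup E] [InnerProductSpace ℝ E] [FiniteDimensional ℝ E]
  [NormedAddCommGroup F] [InnerProductSpace ℝ F] [FiniteDimensional ℝ F] {L : E →ₗ[ℝ] F}

/-- For a coisometry `L`, the endomorphism that scales `(ker L)ᗮ` by `α` and `ker L` by `β`. It is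
written through `L.adjoint ∘ₗ L`, which is then the orthogonal projection onto `(ker L)ᗮ`. -/
noncomputable def orthogonalScaling (L : E →ₗ[ℝ] F) (α β : ℝ) : E →ₗ[ℝ] E :=
  β • LinearMap.id + (α - β) • (L.adjoint ∘ₗ L)

theorem norm_adjoint_apply_of_comp_adjoint_eq_id (hL : L ∘ₗ L.adjoint = LinearMap.id) (y : F) :
    ‖L.adjoint y‖ = ‖y‖ := by
  have hLy : L (L.adjoint y) = y := LinearMap.congr_fun hL y
  rw [← sq_eq_sq₀ (norm_nonneg _) (norm_nonneg _), ← real_inner_self_eq_norm_sq,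
    LinearMap.adjoint_inner_left, hLy, real_inner_self_eq_norm_sq]

theorem finrank_le_of_comp_adjoint_eq_id (hL : L ∘ₗ L.adjoint = LinearMap.id) :
    Module.finrank ℝ F ≤ Module.finrank ℝ E :=
  LinearMap.finrank_le_finrank_of_injective
    (Function.LeftInverse.injective (LinearMap.congr_fun hL))

theorem norm_sq_orthogonalScaling_apply (hL : L ∘ₗ L.adjoint = LinearMap.id) (α β : ℝ) (x : E) :
    ‖orthogonalScaling L α β x‖ ^ 2 = β ^ 2 * ‖x‖ ^ 2 + (α ^ 2 - β ^ 2) * ‖L x‖ ^ 2 := by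
  have h_inner : inner ℝ x (L.adjoint (L x)) = ‖L x‖ ^ 2 := by
    rw [LinearMap.adjoint_inner_right, real_inner_self_eq_norm_sq]
  calc ‖orthogonalScaling L α β x‖ ^ 2 = ‖β • x + (α - β) • L.adjoint (L x)‖ ^ 2 := rfl
    _ = β ^ 2 * ‖x‖ ^ 2 + 2 * (β * (α - β)) * ‖L x‖ ^ 2 + (α - β) ^ 2 * ‖L x‖ ^ 2 := by
      rw [norm_add_sq_real, norm_smul, norm_smul, real_inner_smul_left, real_inner_smul_right,
        h_inner, norm_adjoint_apply_of_comp_adjoint_eq_id hL, mul_pow, mul_pow, Real.norm_eq_abs,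
        Real.norm_eq_abs, sq_abs, sq_abs]
      ring
    _ = β ^ 2 * ‖x‖ ^ 2 + (α ^ 2 - β ^ 2) * ‖L x‖ ^ 2 := by ring

theorem det_orthogonalScaling (hL : L ∘ₗ L.adjoint = LinearMap.id) (α : ℝ) {β : ℝ} (hβ : β ≠ 0) :
    LinearMap.det (orthogonalScaling L α β) =
      α ^ Module.finrank ℝ F * β ^ (Module.finrank ℝ E - Module.finrank ℝ F) := by
  have h_factor : orthogonalScaling L α β =
      β • (LinearMap.id + L.adjoint ∘ₗ ((α / β - 1) • L)) := by
    rw [orthogonalScaling, LinearMap.comp_smul, smul_add, smul_smul, mul_sub_one,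
      mul_div_cancel₀ α hβ]
  have h_comm : LinearMap.id + ((α / β - 1) • L) ∘ₗ L.adjoint = (α / β) • LinearMap.id := by
    rw [LinearMap.smul_comp, hL, sub_smul, one_smul, add_sub_cancel]
  rw [h_factor, LinearMap.det_smul, det_id_add_comp_comm, h_comm, LinearMap.det_smul,
    LinearMap.det_id, mul_one, div_pow, pow_sub₀ β hβ (finrank_le_of_comp_adjoint_eq_id hL)]
  ring

theorem norm_orthogonalScaling_sqrt_le_one (hL : L ∘ₗ L.adjoint = LinearMap.id) {ξ δ : ℝ}
    (hξ : ξ ∈ Set.Ioo 0 1) (hδ : δ ∈ Set.Ioo 0 1) {x : E} (hx_norm : ‖x‖ = 1)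
    (hx : (ξ - δ) * (‖L x‖ ^ 2 - δ) ≤ 0) :
    ‖orthogonalScaling L √(ξ / δ) √((1 - ξ) / (1 - δ)) x‖ ≤ 1 := by
  obtain ⟨hξ_pos, hξ_lt⟩ := hξ
  obtain ⟨hδ_pos, hδ_lt⟩ := hδ
  have hξ_compl : 0 < 1 - ξ := sub_pos.2 hξ_lt
  have hδ_compl : 0 < 1 - δ := sub_pos.2 hδ_lt
  rw [← sq_le_one_iff₀ (norm_nonneg _)]
  calc ‖orthogonalScaling L √(ξ / δ) √((1 - ξ) / (1 - δ)) x‖ ^ 2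
      = (1 - ξ) / (1 - δ) + (ξ / δ - (1 - ξ) / (1 - δ)) * ‖L x‖ ^ 2 := by
        rw [norm_sq_orthogonalScaling_apply hL, Real.sq_sqrt (div_nonneg hξ_pos.le hδ_pos.le),
          Real.sq_sqrt (div_nonneg hξ_compl.le hδ_compl.le), hx_norm, one_pow, mul_one]
    _ = 1 + (ξ - δ) * (‖L x‖ ^ 2 - δ) / (δ * (1 - δ)) := by field_simp; ring
    _ ≤ 1 := add_le_of_nonpos_right (div_nonpos_of_nonpos_of_nonneg hx (by positivity))

theorem comp_adjoint_toEuclideanLin_eq_id {m n : Type*} [Fintype m] [DecidableEq m] [Fintype n]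
    [DecidableEq n] {P : Matrix m n ℝ} (hP : P * Pᵀ = 1) :
    toEuclideanLin P ∘ₗ (toEuclideanLin P).adjoint = LinearMap.id := by
  rw [← toEuclideanLin_conjTranspose_eq_adjoint, conjTranspose_eq_transpose_of_trivial,
    ← toLpLin_mul_same, hP, toLpLin_one]

end Coisometry

section ToSphere

variable {E : Type*} [NormedAddCommGroup E] [NormedSpace ℝ E]

open scoped Pointwise in
theorem Ioo_smul_setOf_norm_map_le_one_subset (T : E →ₗ[ℝ] E) :
    Set.Ioo (0 : ℝ) 1 • (Subtype.val '' {x : sphere (0 : E) 1 | ‖T x‖ ≤ 1}) ⊆ T ⁻¹' ball 0 1 := by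
  rintro _ ⟨r, ⟨hr_pos, hr_lt⟩, _, ⟨x, hx, rfl⟩, rfl⟩
  have h_norm : ‖T (r • (x : E))‖ = r * ‖T x‖ := by
    rw [map_smul, norm_smul, Real.norm_of_nonneg hr_pos.le]
  rw [Set.mem_preimage, mem_ball_zero_iff, h_norm]
  exact (mul_le_of_le_one_right hr_pos.le hx).trans_lt hr_lt

variable [FiniteDimensional ℝ E] [MeasurableSpace E] [BorelSpace E] (μ : Measure E)
  [μ.IsAddHaarMeasure]

theorem toSphere_setOf_norm_map_le_one_le {T : E →ₗ[ℝ] E} (hT : LinearMap.det T ≠ 0) :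
    μ.toSphere {x | ‖T x‖ ≤ 1} ≤
      ENNReal.ofReal |(LinearMap.det T)⁻¹| * μ.toSphere Set.univ := by
  have h_meas : MeasurableSet {x : sphere (0 : E) 1 | ‖T x‖ ≤ 1} :=
    measurableSet_le ((T.continuous_of_finiteDimensional.comp
      continuous_subtype_val).norm.measurable) measurable_const
  rw [μ.toSphere_apply' h_meas, μ.toSphere_apply_univ, mul_left_comm,
    ← Measure.addHaar_preimage_linearMap μ hT]
  gcongr
  exact Ioo_smul_setOf_norm_map_le_one_subset T

end ToSphere

section ExponentialBound

theorem natCast_div_mem_Ioo {m n : ℕ} (hm : 0 < m) (hmn : m < n) :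
    (m / n : ℝ) ∈ Set.Ioo 0 1 := by
  have hn : (0 : ℝ) < n := Nat.cast_pos.2 (hm.trans hmn)
  exact ⟨div_pos (Nat.cast_pos.2 hm) hn, (div_lt_one hn).2 (Nat.cast_lt.2 hmn)⟩

theorem sqrt_le_exp_sub_one_div_two (x : ℝ) : √x ≤ Real.exp ((x - 1) / 2) := by
  rw [Real.exp_half]
  exact Real.sqrt_le_sqrt (by simpa using Real.add_one_le_exp (x - 1))

theorem sqrt_pow_mul_sqrt_pow_le {m n : ℕ} (hm : 0 < m) (hmn : m < n) (δ : ℝ) :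
    √(δ / (m / n)) ^ m * √((1 - δ) / (1 - m / n)) ^ (n - m) ≤
      (√(δ / (m / n)) * Real.exp ((1 - δ / (m / n)) / 2)) ^ m := by
  have hm' : (0 : ℝ) < m := Nat.cast_pos.2 hm
  have hmn' : (0 : ℝ) < n - m := sub_pos.2 (Nat.cast_lt.2 hmn)
  have hn' : (0 : ℝ) < n := hm'.trans (Nat.cast_lt.2 hmn)
  rw [mul_pow]
  gcongr
  calc √((1 - δ) / (1 - m / n)) ^ (n - m)
      ≤ Real.exp (((1 - δ) / (1 - m / n) - 1) / 2) ^ (n - m) := by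
        gcongr
        exact sqrt_le_exp_sub_one_div_two _
    _ = Real.exp ((1 - δ / (m / n)) / 2) ^ m := by
        rw [← Real.exp_nat_mul, ← Real.exp_nat_mul, Nat.cast_sub hmn.le]
        congr 1
        field_simp
        ring

end ExponentialBound

section TailBound

variable {E F : Type*} [NormedAddCommGroup E] [InnerProductSpace ℝ E] [FiniteDimensional ℝ E]
  [NormedAddCommGroup F] [InnerProductSpace ℝ F] [FiniteDimensional ℝ F] {L : E →ₗ[ℝ] F}
  [MeasurableSpace E] [BorelSpace E] (μ : Measure E) [μ.IsAddHaarMeasure]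

theorem toSphere_setOf_mul_norm_sq_sub_nonpos_le (hL : L ∘ₗ L.adjoint = LinearMap.id) {ξ δ : ℝ}
    (hξ : ξ ∈ Set.Ioo 0 1) (hδ : δ ∈ Set.Ioo 0 1) :
    μ.toSphere {x | (ξ - δ) * (‖L x‖ ^ 2 - δ) ≤ 0} ≤
      ENNReal.ofReal (√(δ / ξ) ^ Module.finrank ℝ F *
        √((1 - δ) / (1 - ξ)) ^ (Module.finrank ℝ E - Module.finrank ℝ F)) *
      μ.toSphere Set.univ := by
  have hα : 0 < √(ξ / δ) := Real.sqrt_pos.2 (div_pos hξ.1 hδ.1)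
  have hβ : 0 < √((1 - ξ) / (1 - δ)) :=
    Real.sqrt_pos.2 (div_pos (sub_pos.2 hξ.2) (sub_pos.2 hδ.2))
  have h_det := det_orthogonalScaling hL √(ξ / δ) hβ.ne'
  have h_det_inv : |(LinearMap.det (orthogonalScaling L √(ξ / δ) √((1 - ξ) / (1 - δ))))⁻¹| =
      √(δ / ξ) ^ Module.finrank ℝ F *
        √((1 - δ) / (1 - ξ)) ^ (Module.finrank ℝ E - Module.finrank ℝ F) := by
    rw [h_det, abs_of_pos (by positivity), mul_inv, ← inv_pow, ← inv_pow, ← Real.sqrt_inv,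
      ← Real.sqrt_inv, inv_div, inv_div]
  rw [← h_det_inv]
  exact (measure_mono fun x hx ↦ norm_orthogonalScaling_sqrt_le_one hL hξ hδ
    (norm_eq_of_mem_sphere x) hx).trans
      (toSphere_setOf_norm_map_le_one_le μ (by rw [h_det]; positivity))

theorem inv_univ_smul_toSphere_setOf_mul_norm_sq_sub_nonpos_le
    (hL : L ∘ₗ L.adjoint = LinearMap.id) (hF : 0 < Module.finrank ℝ F)
    (hFE : Module.finrank ℝ F < Module.finrank ℝ E) {ξ δ : ℝ}
    (hξ : ξ = Module.finrank ℝ F / Module.finrank ℝ E) (hδ : δ ∈ Set.Ioo 0 1) :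
    ((μ.toSphere Set.univ)⁻¹ • μ.toSphere) {x | (ξ - δ) * (‖L x‖ ^ 2 - δ) ≤ 0} ≤
      ENNReal.ofReal ((√(δ / ξ) * Real.exp ((1 - δ / ξ) / 2)) ^ Module.finrank ℝ F) := by
  have hξ_mem : ξ ∈ Set.Ioo 0 1 := hξ ▸ natCast_div_mem_Ioo hF hFE
  rw [Measure.smul_apply, smul_eq_mul, mul_comm, ← div_eq_mul_inv]
  refine ENNReal.div_le_of_le_mul
    ((toSphere_setOf_mul_norm_sq_sub_nonpos_le μ hL hξ_mem hδ).trans ?_)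
  gcongr
  rw [hξ]
  exact sqrt_pow_mul_sqrt_pow_le hF hFE δ

theorem projection_measure_concentration_general (hL : L ∘ₗ L.adjoint = LinearMap.id)
    (hF : 0 < Module.finrank ℝ F) (hFE : Module.finrank ℝ F < Module.finrank ℝ E) {ξ : ℝ}
    (hξ : ξ = Module.finrank ℝ F / Module.finrank ℝ E) :
    (∀ δ : ℝ, 0 < δ → δ < ξ →
      ((μ.toSphere Set.univ)⁻¹ • μ.toSphere) {x | ‖L x‖ ^ 2 ≤ δ * ‖(x : E)‖ ^ 2} ≤
        ENNReal.ofReal ((√(δ / ξ) * Real.exp ((1 - δ / ξ) / 2)) ^ Module.finrank ℝ F)) ∧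
    (∀ δ : ℝ, ξ < δ → δ < 1 →
      ((μ.toSphere Set.univ)⁻¹ • μ.toSphere) {x | δ * ‖(x : E)‖ ^ 2 < ‖L x‖ ^ 2} ≤
        ENNReal.ofReal ((√(δ / ξ) * Real.exp ((1 - δ / ξ) / 2)) ^ Module.finrank ℝ F)) := by
  obtain ⟨hξ_pos, hξ_lt⟩ : ξ ∈ Set.Ioo 0 1 := hξ ▸ natCast_div_mem_Ioo hF hFE
  have h_sphere (δ : ℝ) (x : sphere (0 : E) 1) : δ * ‖(x : E)‖ ^ 2 = δ := by
    rw [norm_eq_of_mem_sphere, one_pow, mul_one]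
  simp only [h_sphere]
  refine ⟨fun δ hδ_pos hδ ↦ ?_, fun δ hδ hδ_lt ↦ ?_⟩
  · exact (measure_mono fun x hx ↦
      mul_nonpos_of_nonneg_of_nonpos (sub_nonneg.2 hδ.le) (sub_nonpos.2 hx)).trans
      (inv_univ_smul_toSphere_setOf_mul_norm_sq_sub_nonpos_le μ hL hF hFE hξ
        ⟨hδ_pos, hδ.trans hξ_lt⟩)
  · exact (measure_mono fun x hx ↦
      mul_nonpos_of_nonpos_of_nonneg (sub_nonpos.2 hδ.le) (sub_nonneg.2 (le_of_lt hx))).trans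
      (inv_univ_smul_toSphere_setOf_mul_norm_sq_sub_nonpos_le μ hL hF hFE hξ
        ⟨hξ_pos.trans hδ, hδ_lt⟩)

end TailBound

/-- concentration of measure for orthogonal projections. For an orthogonal
projection `P : ℝⁿ → ℝᵐ`, `ξ = m/n` and `φ(ϑ) = √ϑ e^{(1−ϑ)/2}`, the uniform probability
of `{x ∈ S^{n−1} : ‖Px‖² ≤ δ‖x‖²}` is at most `φ(δ/ξ)^m` for `0 < δ < ξ`, and the
probability of `{x ∈ S^{n−1} : ‖Px‖² > δ‖x‖²}` is at most `φ(δ/ξ)^m` for `ξ < δ < 1`. -/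
theorem projection_measure_concentration (m n : ℕ) (hm : 0 < m) (hmn : m < n)
    (P : Matrix (Fin m) (Fin n) ℝ) (hP : P * Pᵀ = 1)
    (ξ : ℝ) (hξ : ξ = (m : ℝ) / n)
    (φ : ℝ → ℝ) (hφ : ∀ ϑ : ℝ, φ ϑ = Real.sqrt ϑ * Real.exp ((1 - ϑ) / 2)) :
    (∀ δ : ℝ, 0 < δ → δ < ξ →
      (((n : ℝ≥0∞) * volume (ball (0 : EuclideanSpace ℝ (Fin n)) 1))⁻¹ •
          (volume : Measure (EuclideanSpace ℝ (Fin n))).toSphere)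
        {x : sphere (0 : EuclideanSpace ℝ (Fin n)) 1 |
          ‖Matrix.toEuclideanLin P (x : EuclideanSpace ℝ (Fin n))‖ ^ 2 ≤
            δ * ‖(x : EuclideanSpace ℝ (Fin n))‖ ^ 2} ≤
        ENNReal.ofReal (φ (δ / ξ) ^ m)) ∧
    (∀ δ : ℝ, ξ < δ → δ < 1 →
      (((n : ℝ≥0∞) * volume (ball (0 : EuclideanSpace ℝ (Fin n)) 1))⁻¹ •
          (volume : Measure (EuclideanSpace ℝ (Fin n))).toSphere)
        {x : sphere (0 : EuclideanSpace ℝ (Fin n)) 1 |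
          δ * ‖(x : EuclideanSpace ℝ (Fin n))‖ ^ 2 <
            ‖Matrix.toEuclideanLin P (x : EuclideanSpace ℝ (Fin n))‖ ^ 2} ≤
        ENNReal.ofReal (φ (δ / ξ) ^ m)) := by
  simpa [hφ] using projection_measure_concentration_general volume
    (comp_adjoint_toEuclideanLin_eq_id hP) (by simpa) (by simpa) (by simpa)
end

section
/- For parameters α, β > 0 define V = β/(α(α+β+1)) and Z = 2β(β−α)/(α²(α+β+1)(α+β+2)) (the variance and the third-order central moment of the beta distribution with parameters α and β rescaled to expected value one). Then −(1−V)/2 < Z/(2V) < V, one has 1 − Vα > 0, and α and β can be recovered from V and Z via α = 2(Z + V(1−V))/(4V² − (1−V)Z) and β = Vα(α+1)/(1−Vα). Conversely, for any given V > 0 and Z satisfying −(1−V)/2 < Z/(2V) < V, there exist α, β > 0 such that V = β/(α(α+β+1)) and Z = 2β(β−α)/(α²(α+β+1)(α+β+2)). -/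
/-- The variance of the beta distribution with parameters `a`, `b` rescaled to expected
value one. -/
noncomputable def rescaledBetaVar (a b : ℝ) : ℝ := b / (a * (a + b + 1))

/-- The third-order central moment of the beta distribution with parameters `a`, `b`
rescaled to expected value one. -/
noncomputable def rescaledBetaThird (a b : ℝ) : ℝ :=
  2 * b * (b - a) / (a ^ 2 * (a + b + 1) * (a + b + 2))

/-!
Clearing denominators, `V = rescaledBetaVar a b` becomes `b (1 - V a) = V a (a + 1)`. Using it to
eliminate `b` from `Z = rescaledBetaThird a b` leaves the linear equation
`a (4 V² - (1 - V) Z) = 2 (Z + V (1 - V))`, whence the recovery formulas. Write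
`P = 2 V² - Z` and `Q = Z + V (1 - V)` for the slacks in the two inequalities. The linear equation
is equivalent to `2 Q (1 - V a) = a (1 + V) P`, while `P + Q = V (1 + V)`. So for `a, V > 0` one
has `V a < 1` exactly when `P` and `Q` are both positive, and this equivalence serves both
directions of the theorem.
-/

/-- The first parameter `α` of the rescaled beta distribution with variance `V` and third
central moment `Z`. -/
noncomputable def alphaOfMoments (V Z : ℝ) : ℝ :=
  2 * (Z + V * (1 - V)) / (4 * V ^ 2 - (1 - V) * Z)

/-- The second parameter `β` of the rescaled beta distribution with variance `V` and first
parameter `a`. -/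
noncomputable def betaOfVar (V a : ℝ) : ℝ := V * a * (a + 1) / (1 - V * a)

section Parameters

variable {a b V Z : ℝ}

theorem rescaledBetaVar_pos (ha : 0 < a) (hb : 0 < b) : 0 < rescaledBetaVar a b := by
  unfold rescaledBetaVar
  positivity

theorem one_sub_rescaledBetaVar_mul (ha : a ≠ 0) (hs : a + b + 1 ≠ 0) :
    1 - rescaledBetaVar a b * a = (a + 1) / (a + b + 1) := by
  unfold rescaledBetaVar
  field_simp
  ring

theorem rescaledBetaVar_eq_iff (ha : a ≠ 0) (hs : a + b + 1 ≠ 0) :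
    rescaledBetaVar a b = V ↔ b * (1 - V * a) = V * a * (a + 1) := by
  rw [rescaledBetaVar, div_eq_iff (mul_ne_zero ha hs)]
  constructor <;> intro h <;> linear_combination h

theorem rescaledBetaVar_eq_iff_eq_betaOfVar (ha : a ≠ 0) (hs : a + b + 1 ≠ 0)
    (hVa : 1 - V * a ≠ 0) : rescaledBetaVar a b = V ↔ b = betaOfVar V a := by
  rw [rescaledBetaVar_eq_iff ha hs, betaOfVar, eq_div_iff hVa]

theorem rescaledBetaThird_eq_rescaledBetaVar_mul (a b : ℝ) :
    rescaledBetaThird a b = 2 * rescaledBetaVar a b * (b - a) / (a * (a + b + 2)) := by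
  rw [rescaledBetaThird, rescaledBetaVar, mul_div_assoc', div_mul_eq_mul_div, div_div]
  ring

theorem rescaledBetaThird_eq_iff (ha : a ≠ 0) (ha₁ : a + 1 ≠ 0) (hs₁ : a + b + 1 ≠ 0)
    (hs₂ : a + b + 2 ≠ 0) (hV : rescaledBetaVar a b = V) :
    rescaledBetaThird a b = Z ↔
      a * (4 * V ^ 2 - (1 - V) * Z) = 2 * (Z + V * (1 - V)) := by
  have hVa : 1 - V * a ≠ 0 := by
    rw [← hV, one_sub_rescaledBetaVar_mul ha hs₁]
    exact div_ne_zero ha₁ hs₁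
  have hb : b * (1 - V * a) = V * a * (a + 1) := (rescaledBetaVar_eq_iff ha hs₁).1 hV
  rw [rescaledBetaThird_eq_rescaledBetaVar_mul, hV, div_eq_iff (mul_ne_zero ha hs₂)]
  -- The terms cubic in `a` cancel, so that only the factor `a` and a linear factor remain.
  have eliminate_b : (2 * V * (b - a) - Z * (a * (a + b + 2))) * (1 - V * a) =
      a * (a * (4 * V ^ 2 - (1 - V) * Z) - 2 * (Z + V * (1 - V))) := by
    linear_combination (2 * V - Z * a) * hb
  rw [← sub_eq_zero, ← mul_eq_zero_iff_right hVa, eliminate_b, mul_eq_zero_iff_left ha,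
    sub_eq_zero]

end Parameters

section Range

variable {a V Z : ℝ}

theorem neg_one_sub_div_two_lt_div_two_mul_iff (hV : 0 < V) :
    -(1 - V) / 2 < Z / (2 * V) ↔ 0 < Z + V * (1 - V) := by
  rw [lt_div_iff₀ (by positivity)]
  constructor <;> intro h <;> linarith

theorem div_two_mul_lt_self_iff (hV : 0 < V) : Z / (2 * V) < V ↔ 0 < 2 * V ^ 2 - Z := by
  rw [div_lt_iff₀ (by positivity)]
  constructor <;> intro h <;> linarith

theorem alphaOfMoments_denom_pos (hV : 0 < V) (hlower : 0 < Z + V * (1 - V))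
    (hupper : 0 < 2 * V ^ 2 - Z) : 0 < 4 * V ^ 2 - (1 - V) * Z := by
  have denom_eq : 4 * V ^ 2 - (1 - V) * Z =
      2 * V * (Z + V * (1 - V)) + (1 + V) * (2 * V ^ 2 - Z) := by ring
  rw [denom_eq]
  positivity

theorem one_sub_mul_pos_iff (ha : 0 < a) (hV : 0 < V)
    (h : a * (4 * V ^ 2 - (1 - V) * Z) = 2 * (Z + V * (1 - V))) :
    0 < 1 - V * a ↔ 0 < Z + V * (1 - V) ∧ 0 < 2 * V ^ 2 - Z := by
  have balance : (Z + V * (1 - V)) * (2 * (1 - V * a)) =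
      a * (1 + V) * (2 * V ^ 2 - Z) := by
    linear_combination -h
  constructor
  · intro hVa
    have hupper : 0 < 2 * V ^ 2 - Z := by
      refine pos_of_mul_pos_left (b := a * (1 + V) + 2 * (1 - V * a)) ?_ (by positivity)
      calc 0 < 2 * (1 - V * a) * (V * (1 + V)) := by positivity
        _ = (2 * V ^ 2 - Z) * (a * (1 + V) + 2 * (1 - V * a)) := by
          linear_combination balance
    have hprod : 0 < (Z + V * (1 - V)) * (2 * (1 - V * a)) := by
      rw [balance]
      positivity
    exact ⟨pos_of_mul_pos_left hprod (by positivity), hupper⟩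
  · rintro ⟨hlower, hupper⟩
    have hprod : 0 < (Z + V * (1 - V)) * (2 * (1 - V * a)) := by
      rw [balance]
      positivity
    linarith [pos_of_mul_pos_right hprod hlower.le]

end Range

section Recovery

variable {a b V Z : ℝ}

theorem one_sub_rescaledBetaVar_mul_pos (ha : 0 < a) (hb : 0 < b) :
    0 < 1 - rescaledBetaVar a b * a := by
  rw [one_sub_rescaledBetaVar_mul ha.ne' (by positivity)]
  positivity

theorem mul_alphaOfMoments_denom (ha : 0 < a) (hb : 0 < b) :
    a * (4 * rescaledBetaVar a b ^ 2 - (1 - rescaledBetaVar a b) * rescaledBetaThird a b) =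
      2 * (rescaledBetaThird a b + rescaledBetaVar a b * (1 - rescaledBetaVar a b)) :=
  (rescaledBetaThird_eq_iff ha.ne' (by positivity) (by positivity) (by positivity) rfl).1 rfl

theorem rescaledBeta_moment_bounds (ha : 0 < a) (hb : 0 < b) :
    0 < rescaledBetaThird a b + rescaledBetaVar a b * (1 - rescaledBetaVar a b) ∧
      0 < 2 * rescaledBetaVar a b ^ 2 - rescaledBetaThird a b :=
  (one_sub_mul_pos_iff ha (rescaledBetaVar_pos ha hb) (mul_alphaOfMoments_denom ha hb)).1
    (one_sub_rescaledBetaVar_mul_pos ha hb)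

theorem eq_alphaOfMoments (ha : 0 < a) (hb : 0 < b) :
    a = alphaOfMoments (rescaledBetaVar a b) (rescaledBetaThird a b) := by
  obtain ⟨hlower, hupper⟩ := rescaledBeta_moment_bounds ha hb
  have denom_pos := alphaOfMoments_denom_pos (rescaledBetaVar_pos ha hb) hlower hupper
  exact (eq_div_iff denom_pos.ne').2 (mul_alphaOfMoments_denom ha hb)

theorem eq_betaOfVar (ha : 0 < a) (hb : 0 < b) : b = betaOfVar (rescaledBetaVar a b) a :=
  (rescaledBetaVar_eq_iff_eq_betaOfVar ha.ne' (by positivity)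
    (one_sub_rescaledBetaVar_mul_pos ha hb).ne').1 rfl

theorem exists_rescaledBeta_of_moment_bounds (hV : 0 < V) (hlower : 0 < Z + V * (1 - V))
    (hupper : 0 < 2 * V ^ 2 - Z) :
    ∃ a b : ℝ, 0 < a ∧ 0 < b ∧ V = rescaledBetaVar a b ∧ Z = rescaledBetaThird a b := by
  have denom_pos := alphaOfMoments_denom_pos hV hlower hupper
  obtain ⟨a, ha_def⟩ : ∃ a, a = alphaOfMoments V Z := ⟨_, rfl⟩
  have ha : 0 < a := by
    rw [ha_def, alphaOfMoments]
    positivity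
  have ha_eq : a * (4 * V ^ 2 - (1 - V) * Z) = 2 * (Z + V * (1 - V)) :=
    (eq_div_iff denom_pos.ne').1 ha_def
  have hVa : 0 < 1 - V * a := (one_sub_mul_pos_iff ha hV ha_eq).2 ⟨hlower, hupper⟩
  obtain ⟨b, hb_def⟩ : ∃ b, b = betaOfVar V a := ⟨_, rfl⟩
  have hb : 0 < b := by
    rw [hb_def, betaOfVar]
    positivity
  have var_eq : rescaledBetaVar a b = V :=
    (rescaledBetaVar_eq_iff_eq_betaOfVar ha.ne' (by positivity) hVa.ne').2 hb_def
  have third_eq : rescaledBetaThird a b = Z :=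
    (rescaledBetaThird_eq_iff ha.ne' (by positivity) (by positivity) (by positivity)
      var_eq).2 ha_eq
  exact ⟨a, b, ha, hb, var_eq.symm, third_eq.symm⟩

end Recovery

/-- the variance `V` and third central moment `Z` of the rescaled beta
distribution satisfy `−(1−V)/2 < Z/(2V) < V` and `1 − Vα > 0`, the parameters can be
recovered by `α = 2(Z+V(1−V))/(4V²−(1−V)Z)` and `β = Vα(α+1)/(1−Vα)`, and conversely any
`V > 0` and `Z` satisfying these inequalities arise from some parameters `α, β > 0`. -/
theorem rescaledBeta_moment_characterization :
    (∀ a b : ℝ, 0 < a → 0 < b →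
      -(1 - rescaledBetaVar a b) / 2 < rescaledBetaThird a b / (2 * rescaledBetaVar a b) ∧
      rescaledBetaThird a b / (2 * rescaledBetaVar a b) < rescaledBetaVar a b ∧
      0 < 1 - rescaledBetaVar a b * a ∧
      a = 2 * (rescaledBetaThird a b + rescaledBetaVar a b * (1 - rescaledBetaVar a b)) /
        (4 * rescaledBetaVar a b ^ 2 - (1 - rescaledBetaVar a b) * rescaledBetaThird a b) ∧
      b = rescaledBetaVar a b * a * (a + 1) / (1 - rescaledBetaVar a b * a)) ∧
    (∀ V Z : ℝ, 0 < V → -(1 - V) / 2 < Z / (2 * V) → Z / (2 * V) < V →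
      ∃ a b : ℝ, 0 < a ∧ 0 < b ∧ V = rescaledBetaVar a b ∧ Z = rescaledBetaThird a b) := by
  refine ⟨fun a b ha hb => ?_, fun V Z hV hlower hupper => ?_⟩
  · have hV := rescaledBetaVar_pos ha hb
    obtain ⟨hlower, hupper⟩ := rescaledBeta_moment_bounds ha hb
    exact ⟨(neg_one_sub_div_two_lt_div_two_mul_iff hV).2 hlower,
      (div_two_mul_lt_self_iff hV).2 hupper, one_sub_rescaledBetaVar_mul_pos ha hb,
      eq_alphaOfMoments ha hb, eq_betaOfVar ha hb⟩
  · exact exists_rescaledBeta_of_moment_bounds hV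
      ((neg_one_sub_div_two_lt_div_two_mul_iff hV).1 hlower)
      ((div_two_mul_lt_self_iff hV).1 hupper)
end
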